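/- arXiv:2504.19140 — 10 statements merged into one kernel-verified Lean document; each statement's English description precedes it below -/
import Mathlib

section
/- Let x̂ ∈ ℂⁿ and ρ̂ : {−2B,…,2B} → ℂ. For every φ ∈ ℝ, define x̂′[k] = x̂[k]·e^{ιkφ} for k ∈ {−B,…,B} and ρ̂′[k] = ρ̂[k]·e^{−ιkφ} for k ∈ {−2B,…,2B}. Then the pair (x̂′, ρ̂′) produces the same first two moments as (x̂, ρ̂): x̂′[k]·ρ̂′[k] = x̂[k]·ρ̂[k] for all k ∈ {−B,…,B}, and x̂′[k₁]·conj(x̂′[k₂])·ρ̂′[k₁−k₂] = x̂[k₁]·conj(x̂[k₂])·ρ̂[k₁−k₂] for all k₁, k₂ ∈ {−B,…,B}. -/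
/-!
Each moment entry picks up a product of phases whose exponents sum to zero: `k - k = 0` for the
first moment and `k₁ - k₂ - (k₁ - k₂) = 0` for the second, where conjugation negates the exponent
because `φ` is real. All indices occurring, `k` and `k₁ - k₂`, lie in `[-2B, 2B]`.
-/

open Complex ComplexConjugate

/-- a global rotation of the signal together with the opposite rotation of the
distribution produces the same first two moments. -/
theorem stmt_1 (B : ℕ) (hB : 1 ≤ B)
    (xhat rhohat : ℤ → ℂ) (φ : ℝ)
    (xhat' rhohat' : ℤ → ℂ)
    (hx' : ∀ k ∈ Finset.Icc (-(B : ℤ)) (B : ℤ),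
      xhat' k = xhat k * Complex.exp (Complex.I * (k : ℂ) * (φ : ℂ)))
    (hρ' : ∀ k ∈ Finset.Icc (-(2 * B : ℤ)) (2 * B : ℤ),
      rhohat' k = rhohat k * Complex.exp (-Complex.I * (k : ℂ) * (φ : ℂ))) :
    (∀ k ∈ Finset.Icc (-(B : ℤ)) (B : ℤ), xhat' k * rhohat' k = xhat k * rhohat k) ∧
    (∀ k₁ ∈ Finset.Icc (-(B : ℤ)) (B : ℤ), ∀ k₂ ∈ Finset.Icc (-(B : ℤ)) (B : ℤ),
      xhat' k₁ * conj (xhat' k₂) * rhohat' (k₁ - k₂) =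
        xhat k₁ * conj (xhat k₂) * rhohat (k₁ - k₂)) := by
  constructor
  · intro k hk
    have hk2 : k ∈ Finset.Icc (-(2 * B : ℤ)) (2 * B : ℤ) := by
      rw [Finset.mem_Icc] at hk ⊢
      omega
    -- The phases `e^{ιkφ}` and `e^{-ιkφ}` cancel.
    have hphase : exp (I * (k : ℂ) * (φ : ℂ)) * exp (-I * (k : ℂ) * (φ : ℂ)) = 1 := by
      rw [← exp_add, ← exp_zero]
      congr 1
      ring
    rw [hx' k hk, hρ' k hk2]
    linear_combination (xhat k * rhohat k) * hphase
  · intro k₁ h₁ k₂ h₂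
    have h12 : k₁ - k₂ ∈ Finset.Icc (-(2 * B : ℤ)) (2 * B : ℤ) := by
      rw [Finset.mem_Icc] at h₁ h₂ ⊢
      omega
    have hconj : conj (exp (I * (k₂ : ℂ) * (φ : ℂ))) = exp (-I * (k₂ : ℂ) * (φ : ℂ)) := by
      rw [← exp_conj]
      simp
    -- The phases `e^{ιk₁φ}`, `e^{-ιk₂φ}` and `e^{-ι(k₁-k₂)φ}` cancel.
    have hphase : exp (I * (k₁ : ℂ) * (φ : ℂ)) * exp (-I * (k₂ : ℂ) * (φ : ℂ)) *
        exp (-I * ((k₁ - k₂ : ℤ) : ℂ) * (φ : ℂ)) = 1 := by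
      rw [← exp_add, ← exp_add, ← exp_zero]
      congr 1
      push_cast
      ring
    rw [hx' k₁ h₁, hx' k₂ h₂, hρ' _ h12, map_mul, hconj]
    linear_combination (xhat k₁ * conj (xhat k₂) * rhohat (k₁ - k₂)) * hphase
end

section
/- Let x̂, x̂′ ∈ ℂⁿ be non-vanishing and let ρ̂, ρ̂′ : {−2B,…,2B} → ℂ be non-vanishing with ρ̂[0] = ρ̂′[0] = 1/(2π) and conjugate symmetry ρ̂[−k] = conj(ρ̂[k]) and ρ̂′[−k] = conj(ρ̂′[k]) for all k. Suppose the two pairs produce the same first two moments: x̂[k]·ρ̂[k] = x̂′[k]·ρ̂′[k] for all k ∈ {−B,…,B}, and x̂[k₁]·conj(x̂[k₂])·ρ̂[k₁−k₂] = x̂′[k₁]·conj(x̂′[k₂])·ρ̂′[k₁−k₂] for all k₁, k₂ ∈ {−B,…,B}. Then there exists a complex number u with |u| = 1 such that ρ̂′[k] = ρ̂[k]·u^k for all k ∈ {−2B,…,2B} and x̂′[k] = x̂[k]·u^{−k} for all k ∈ {−B,…,B}; that is, the signal and the distribution are determined up to a global rotation. -/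
/-!
Put `r k = rhohat' k / rhohat k` for `|k| ≤ 2B`. The first moments give `xhat k = xhat' k * r k`, and
substituting this into the second moments gives `r k₁ * conj (r k₂) = r (k₁ - k₂)` for
`|k₁|, |k₂| ≤ B`. Since `r 0 = 1`, all these `r k` are unimodular, and conjugate symmetry
`r (-k) = conj (r k)` turns the identity into `r (a + b) = r a * r b`. Hence `r k = (r 1) ^ k`
for `|k| ≤ B`, and then for `|k| ≤ 2B`, because every such `k` is a sum of two indices of absolute
value at most `B`. The rotation is `u = r 1`.
-/

open Complex Real ComplexConjugate

/-- A conjugate-symmetric function on `{-2B, …, 2B}` with `r 0 = 1` and the character identity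
`r k₁ * conj (r k₂) = r (k₁ - k₂)` on `{-B, …, B}` is a unimodular character on `{-2B, …, 2B}`. -/
theorem eq_zpow_of_mul_conj (B : ℕ) (hB : 1 ≤ B) (r : ℤ → ℂ) (h0 : r 0 = 1)
    (hsym : ∀ k : ℤ, -(2 * B : ℤ) ≤ k → k ≤ 2 * B → r (-k) = conj (r k))
    (hmul : ∀ a b : ℤ, -(B : ℤ) ≤ a → a ≤ B → -(B : ℤ) ≤ b → b ≤ B →
      r a * conj (r b) = r (a - b)) :
    ‖r 1‖ = 1 ∧ ∀ k : ℤ, -(2 * B : ℤ) ≤ k → k ≤ 2 * B → r k = r 1 ^ k := by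
  have hnorm : ‖r 1‖ = 1 := by
    have h := hmul 1 1 (by omega) (by omega) (by omega) (by omega)
    rw [sub_self, h0, Complex.mul_conj'] at h
    have h2 : ‖r 1‖ ^ 2 = 1 := by exact_mod_cast h
    exact (pow_eq_one_iff_of_nonneg (norm_nonneg _) two_ne_zero).1 h2
  have hadd : ∀ a b : ℤ, -(B : ℤ) ≤ a → a ≤ B → -(B : ℤ) ≤ b → b ≤ B →
      r (a + b) = r a * r b := by
    intro a b ha ha' hb hb'
    have h := hmul a (-b) ha ha' (by omega) (by omega)
    rw [hsym b (by omega) (by omega), Complex.conj_conj, sub_neg_eq_add] at h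
    exact h.symm
  have hsmall : ∀ n : ℕ, n ≤ B → r n = r 1 ^ n := by
    intro n
    induction n with
    | zero => intro _; simpa using h0
    | succ n ih =>
      intro hn
      rw [Nat.cast_succ, hadd n 1 (by omega) (by omega) (by omega) (by omega),
        ih (by omega), pow_succ]
  have hnat : ∀ n : ℕ, n ≤ 2 * B → r n = r 1 ^ n := by
    intro n hn
    by_cases hle : n ≤ B
    · exact hsmall n hle
    · obtain ⟨m, rfl⟩ := Nat.exists_eq_add_of_le (not_le.1 hle).le
      rw [Nat.cast_add, hadd B m (by omega) (by omega) (by omega) (by omega),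
        hsmall B le_rfl, hsmall m (by omega), pow_add]
  refine ⟨hnorm, fun k hk hk' => ?_⟩
  obtain ⟨n, rfl | rfl⟩ := k.eq_nat_or_neg
  · rw [hnat n (by omega), zpow_natCast]
  · rw [hsym n (by omega) (by omega), hnat n (by omega), map_pow, zpow_neg, zpow_natCast,
      ← inv_pow, Complex.inv_eq_conj hnorm]

/-- uniqueness, up to a global rotation, of a non-vanishing signal and
non-vanishing distribution from the first two moments (1-D case). -/
theorem stmt_2 (B : ℕ) (hB : 1 ≤ B)
    (xhat xhat' : ℤ → ℂ) (rhohat rhohat' : ℤ → ℂ)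
    (hxnv : ∀ k ∈ Finset.Icc (-(B : ℤ)) (B : ℤ), xhat k ≠ 0)
    (hxnv' : ∀ k ∈ Finset.Icc (-(B : ℤ)) (B : ℤ), xhat' k ≠ 0)
    (hρnv : ∀ k ∈ Finset.Icc (-(2 * B : ℤ)) (2 * B : ℤ), rhohat k ≠ 0)
    (hρnv' : ∀ k ∈ Finset.Icc (-(2 * B : ℤ)) (2 * B : ℤ), rhohat' k ≠ 0)
    (hρ0 : rhohat 0 = 1 / (2 * π))
    (hρ0' : rhohat' 0 = 1 / (2 * π))
    (hρsym : ∀ k ∈ Finset.Icc (-(2 * B : ℤ)) (2 * B : ℤ), rhohat (-k) = conj (rhohat k))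
    (hρsym' : ∀ k ∈ Finset.Icc (-(2 * B : ℤ)) (2 * B : ℤ), rhohat' (-k) = conj (rhohat' k))
    (hM1 : ∀ k ∈ Finset.Icc (-(B : ℤ)) (B : ℤ), xhat k * rhohat k = xhat' k * rhohat' k)
    (hM2 : ∀ k₁ ∈ Finset.Icc (-(B : ℤ)) (B : ℤ), ∀ k₂ ∈ Finset.Icc (-(B : ℤ)) (B : ℤ),
      xhat k₁ * conj (xhat k₂) * rhohat (k₁ - k₂) =
        xhat' k₁ * conj (xhat' k₂) * rhohat' (k₁ - k₂)) :
    ∃ u : ℂ, ‖u‖ = 1 ∧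
      (∀ k ∈ Finset.Icc (-(2 * B : ℤ)) (2 * B : ℤ), rhohat' k = rhohat k * u ^ k) ∧
      (∀ k ∈ Finset.Icc (-(B : ℤ)) (B : ℤ), xhat' k = xhat k * u ^ (-k)) := by
  have hr0 : rhohat 0 ≠ 0 := hρnv 0 (by rw [Finset.mem_Icc]; omega)
  have hx : ∀ k : ℤ, -(B : ℤ) ≤ k → k ≤ B → xhat k = xhat' k * (rhohat' k / rhohat k) := by
    intro k hk hk'
    have hne := hρnv k (Finset.mem_Icc.2 ⟨by omega, by omega⟩)
    have h := hM1 k (Finset.mem_Icc.2 ⟨hk, hk'⟩)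
    rw [← mul_div_assoc, ← h, mul_div_cancel_right₀ _ hne]
  obtain ⟨hu, hr⟩ := eq_zpow_of_mul_conj B hB (fun k => rhohat' k / rhohat k)
    (by simp only [hρ0', ← hρ0]; exact div_self hr0)
    (by
      intro k hk hk'
      simp only [hρsym k (Finset.mem_Icc.2 ⟨hk, hk'⟩), hρsym' k (Finset.mem_Icc.2 ⟨hk, hk'⟩),
        map_div₀])
    (by
      intro a b ha ha' hb hb'
      have h := hM2 a (Finset.mem_Icc.2 ⟨ha, ha'⟩) b (Finset.mem_Icc.2 ⟨hb, hb'⟩)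
      have hne := hρnv (a - b) (Finset.mem_Icc.2 ⟨by omega, by omega⟩)
      have hxa := hxnv' a (Finset.mem_Icc.2 ⟨ha, ha'⟩)
      have hxb : conj (xhat' b) ≠ 0 :=
        (map_ne_zero _).2 (hxnv' b (Finset.mem_Icc.2 ⟨hb, hb'⟩))
      rw [hx a ha ha', hx b hb hb', map_mul] at h
      rw [eq_div_iff hne]
      apply mul_left_cancel₀ (mul_ne_zero hxa hxb)
      linear_combination h)
  have hρ : ∀ k : ℤ, -(2 * B : ℤ) ≤ k → k ≤ 2 * B →
      rhohat' k / rhohat k = (rhohat' 1 / rhohat 1) ^ k := hr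
  refine ⟨rhohat' 1 / rhohat 1, hu, fun k hk => ?_, fun k hk => ?_⟩
  · have hne := hρnv k hk
    rw [Finset.mem_Icc] at hk
    rw [← hρ k hk.1 hk.2, mul_div_cancel₀ _ hne]
  · rw [Finset.mem_Icc] at hk
    have hu0 : rhohat' 1 / rhohat 1 ≠ 0 := norm_ne_zero_iff.1 (by rw [hu]; exact one_ne_zero)
    rw [hx k hk.1 hk.2, hρ k (by omega) (by omega), mul_assoc, ← zpow_add₀ hu0, add_neg_cancel,
      zpow_zero, mul_one]
end

section
/- Let ρ̂ : {−2B,…,2B} → ℂ. Then for every v ∈ ℂⁿ, ‖T_ρ − C_{v_opt}‖_F² ≤ ‖T_ρ − C_v‖_F², and the minimal value is ‖T_ρ − C_{v_opt}‖_F² = S_B(ρ̂). -/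
/-!
The entries of `T_ρ - C_v` on the cyclic diagonal `i - j = d (mod n)` take only two values:
`ρ̂[d] - v[d]` at `n - d` places (no wrap-around) and `ρ̂[d - n] - v[d]` at `d` places.
Hence `‖T_ρ - C_v‖_F²` splits into independent one-variable problems (`frobSq_sub_Cmat`), each of
which is a weighted two-point least-squares problem.  Completing the square
(`weighted_two_point`) shows that the weighted mean `v_opt[d]` is the minimizer and that the
residual is `|ρ̂[d] - ρ̂[d - n]|² · d (n - d) / n`, the summand of `S_B`.
-/

open Complex ComplexConjugate

/-- The Toeplitz matrix `T_ρ[k₁,k₂] = ρ̂[k₁ - k₂]`, with indices `k = i - B ∈ {-B,…,B}`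
for `i : Fin (2B+1)`. -/
noncomputable def Tmat (B : ℕ) (rhohat : ℤ → ℂ) :
    Matrix (Fin (2 * B + 1)) (Fin (2 * B + 1)) ℂ :=
  Matrix.of fun i j => rhohat (((i : ℕ) : ℤ) - ((j : ℕ) : ℤ))

/-- The circulant matrix `C_v[k₁,k₂] = v[(k₁ - k₂) mod n]`, `n = 2B+1`. -/
noncomputable def Cmat (B : ℕ) (v : Fin (2 * B + 1) → ℂ) :
    Matrix (Fin (2 * B + 1)) (Fin (2 * B + 1)) ℂ :=
  Matrix.of fun i j => v (i - j)

/-- `v_opt[k] = (k·ρ̂[-(n-k)] + (n-k)·ρ̂[k]) / n`, `n = 2B+1`. -/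
noncomputable def vopt (B : ℕ) (rhohat : ℤ → ℂ) : Fin (2 * B + 1) → ℂ :=
  fun k => ((((k : ℕ) : ℤ) : ℂ) * rhohat (-((2 * B + 1 : ℤ) - ((k : ℕ) : ℤ))) +
      (((2 * B + 1 : ℤ) - ((k : ℕ) : ℤ) : ℤ) : ℂ) * rhohat ((k : ℕ) : ℤ)) /
    ((2 * B + 1 : ℕ) : ℂ)

/-- `S_B(ρ̂) = Σ_{k=1}^{n-1} |ρ̂[k] - ρ̂[-(n-k)]|² · k(n-k)/n`, `n = 2B+1`. -/
noncomputable def SB (B : ℕ) (rhohat : ℤ → ℂ) : ℝ :=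
  ∑ k ∈ Finset.Icc (1 : ℤ) (2 * B : ℤ),
    ‖rhohat k - rhohat (-((2 * B + 1 : ℤ) - k))‖ ^ 2 *
      ((k * ((2 * B + 1 : ℤ) - k) : ℤ) : ℝ) / ((2 * B + 1 : ℕ) : ℝ)

/-- The squared Frobenius norm of a complex matrix. -/
noncomputable def frobSq {m : Type*} [Fintype m] (A : Matrix m m ℂ) : ℝ :=
  ∑ i, ∑ j, ‖A i j‖ ^ 2

/-- Along the `d`-th cyclic diagonal, `n - d` indices `j` satisfy `d + j < n` and the other `d`
wrap around. -/
lemma sum_diagonal (n d : ℕ) (hd : d ≤ n) (x y : ℝ) :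
    ∑ j : Fin n, (if d + (j : ℕ) < n then x else y) = ((n : ℝ) - d) * x + d * y := by
  rw [Fin.sum_univ_eq_sum_range (fun j => if d + j < n then x else y) n]
  obtain ⟨m, rfl⟩ := Nat.exists_eq_add_of_le hd
  have h1 : ∑ j ∈ Finset.range m, (if d + j < d + m then x else y) = m * x := by
    rw [Finset.sum_congr rfl (g := fun _ => x)]
    · simp
    · intro j hj
      rw [if_pos (by have := Finset.mem_range.1 hj; omega)]
  have h2 : ∑ j ∈ Finset.range d, (if d + (m + j) < d + m then x else y) = d * y := by
    rw [Finset.sum_congr rfl (g := fun _ => y)]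
    · simp
    · intro j _
      rw [if_neg (by omega)]
  rw [Nat.add_comm d m, Finset.sum_range_add]
  rw [Nat.add_comm m d, h1, h2]
  push_cast
  ring

/-- The squared Frobenius distance from `T_ρ` to a circulant matrix, grouped by cyclic
diagonals. -/
lemma frobSq_sub_Cmat (B : ℕ) (rhohat : ℤ → ℂ) (v : Fin (2 * B + 1) → ℂ) :
    frobSq (Tmat B rhohat - Cmat B v) =
      ∑ d : Fin (2 * B + 1),
        ((((2 * B + 1 : ℕ) : ℝ) - (d : ℕ)) * ‖rhohat (d : ℕ) - v d‖ ^ 2 +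
          ((d : ℕ) : ℝ) * ‖rhohat (-((2 * B + 1 : ℤ) - ((d : ℕ) : ℤ))) - v d‖ ^ 2) := by
  unfold frobSq
  rw [Finset.sum_comm]
  have key : ∀ j : Fin (2 * B + 1),
      ∑ i, ‖(Tmat B rhohat - Cmat B v) i j‖ ^ 2 =
        ∑ d, ‖(Tmat B rhohat - Cmat B v) (d + j) j‖ ^ 2 := fun j =>
    (Equiv.sum_comp (Equiv.addRight j)
      (fun i => ‖(Tmat B rhohat - Cmat B v) i j‖ ^ 2)).symm
  rw [Finset.sum_congr rfl fun j _ => key j, Finset.sum_comm]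
  refine Finset.sum_congr rfl fun d _ => ?_
  rw [← sum_diagonal (2 * B + 1) d d.isLt.le]
  refine Finset.sum_congr rfl fun j _ => ?_
  simp only [Tmat, Cmat, Matrix.sub_apply, Matrix.of_apply, add_sub_cancel_right]
  have hd := d.isLt
  have hj := j.isLt
  split_ifs with h
  · rw [Fin.val_add_eq_of_add_lt h]
    congr 4
    push_cast
    ring
  · have hval : ((d + j : Fin (2 * B + 1)) : ℕ) = d + j - (2 * B + 1) := by
      rw [Fin.val_add, Nat.mod_eq_sub_mod (by omega), Nat.mod_eq_of_lt (by omega)]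
    rw [hval]
    congr 4
    omega

/-- Completing the square in a two-point least-squares problem with total weight `n`. -/
lemma weighted_two_point (n d : ℝ) (hn : n ≠ 0) (a b z : ℂ) :
    (n - d) * ‖a - z‖ ^ 2 + d * ‖b - z‖ ^ 2 =
      n * ‖((d : ℂ) * b + ((n - d : ℝ) : ℂ) * a) / (n : ℂ) - z‖ ^ 2 +
        ‖a - b‖ ^ 2 * (d * (n - d)) / n := by
  have hm : ((d : ℂ) * b + ((n - d : ℝ) : ℂ) * a) / (n : ℂ) - z =
      (((d / n : ℝ) : ℂ) * b + ((1 - d / n : ℝ) : ℂ) * a) - z := by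
    have : (n : ℂ) ≠ 0 := by exact_mod_cast hn
    push_cast
    field_simp
  rw [hm]
  simp only [Complex.sq_norm, Complex.normSq_apply, Complex.sub_re, Complex.sub_im,
    Complex.add_re, Complex.add_im, Complex.re_ofReal_mul, Complex.im_ofReal_mul]
  field_simp
  ring

/-- The distance to `C_v` exceeds `S_B` by exactly `n ‖v_opt - v‖²`. -/
lemma frobSq_sub_Cmat_eq_SB (B : ℕ) (rhohat : ℤ → ℂ) (v : Fin (2 * B + 1) → ℂ) :
    frobSq (Tmat B rhohat - Cmat B v) =
      ((2 * B + 1 : ℕ) : ℝ) * ∑ d, ‖vopt B rhohat d - v d‖ ^ 2 + SB B rhohat := by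
  have hSB : SB B rhohat = ∑ d : Fin (2 * B + 1),
      ‖rhohat (d : ℕ) - rhohat (-((2 * B + 1 : ℤ) - ((d : ℕ) : ℤ)))‖ ^ 2 *
        (((d : ℕ) : ℝ) * (((2 * B + 1 : ℕ) : ℝ) - (d : ℕ))) / ((2 * B + 1 : ℕ) : ℝ) := by
    -- The `d = 0` term vanishes, so the sum runs over `d = 1, …, 2B`.
    rw [Fin.sum_univ_succ, SB]
    simp only [Fin.val_zero, Nat.cast_zero, zero_mul, mul_zero, zero_div, zero_add]
    symm
    refine Finset.sum_bij (fun (d : Fin (2 * B)) _ => ((d : ℕ) : ℤ) + 1) ?_ ?_ ?_ ?_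
    · intro d _
      have := d.isLt
      simp only [Finset.mem_Icc]
      omega
    · intro a _ b _ h
      ext
      omega
    · intro k hk
      rw [Finset.mem_Icc] at hk
      exact ⟨⟨(k - 1).toNat, by omega⟩, Finset.mem_univ _, by simp only []; omega⟩
    · intro d _
      simp only [Fin.val_succ]
      push_cast
      rfl
  rw [frobSq_sub_Cmat, hSB, Finset.mul_sum, ← Finset.sum_add_distrib]
  refine Finset.sum_congr rfl fun d _ => ?_
  rw [weighted_two_point _ _ (by positivity)]
  simp only [vopt]
  push_cast
  rfl

/-- `C_{v_opt}` is the closest circulant matrix to the Toeplitz matrix `T_ρ`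
in the Frobenius norm, and the minimal squared distance equals `S_B(ρ̂)`. -/
theorem stmt_3 (B : ℕ) (hB : 1 ≤ B) (rhohat : ℤ → ℂ) :
    (∀ v : Fin (2 * B + 1) → ℂ,
      frobSq (Tmat B rhohat - Cmat B (vopt B rhohat)) ≤ frobSq (Tmat B rhohat - Cmat B v)) ∧
    frobSq (Tmat B rhohat - Cmat B (vopt B rhohat)) = SB B rhohat := by
  have hopt : frobSq (Tmat B rhohat - Cmat B (vopt B rhohat)) = SB B rhohat := by
    simp [frobSq_sub_Cmat_eq_SB]
  refine ⟨fun v => ?_, hopt⟩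
  rw [hopt, frobSq_sub_Cmat_eq_SB]
  have : 0 ≤ ((2 * B + 1 : ℕ) : ℝ) * ∑ d, ‖vopt B rhohat d - v d‖ ^ 2 := by positivity
  linarith
end

section
/- Let ρ̂ : {−2B,…,2B} → ℂ satisfy ρ̂[−k] = conj(ρ̂[k]) for all k and S_B(ρ̂) = 0, so that T_ρ = C_{v_opt}. Let x̃ ∈ ℂⁿ with |x̃[k]| = 1 for all k ∈ {−B,…,B}, and set M₂ = 2π·D_x̃·T_ρ·D_x̃*. If λ is an eigenvalue of M₂ whose eigenspace is one-dimensional and u ∈ ℂⁿ is a unit-norm eigenvector of M₂ for λ, then there exist l ∈ {0,…,n−1} and α ∈ ℂ with |α| = 1 such that u[k] = (α/√n)·e^{−ι2πlk/n}·x̃[k] for all k ∈ {−B,…,B}. -/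
/-!
Write `n = 2B+1`. The condition `S_B(ρ̂) = 0` forces `ρ̂[k] = ρ̂[k-n]` for `1 ≤ k ≤ n-1`, so `T_ρ` is
invariant under the cyclic shift of both indices (`Tmat_add_one`). Hence `M₂` commutes with the
conjugate `D_x̃ P D_x̃*` of the cyclic shift `P`, and this operator maps the one-dimensional
eigenspace containing `u` to itself. So `v = D_x̃* u` satisfies `v[i+1] = c · v[i]` cyclically for
some scalar `c`, whence `v[i] = cⁱ v[0]` and `cⁿ = 1`: `v` is a multiple of a Fourier mode
(`geometric_of_shift`, `exists_exp_of_pow_eq_one`), and the normalization of `u` fixes the modulus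
of the multiple.
-/

open Complex Real ComplexConjugate

/-- The angle `2πl·k/n` for the index `i : Fin (2B+1)` representing `k = i - B`. -/
noncomputable def phase (B l : ℕ) (i : Fin (2 * B + 1)) : ℝ :=
  2 * π * (l : ℝ) * (((((i : ℕ) : ℤ) - (B : ℤ)) : ℤ) : ℝ) / ((2 * B + 1 : ℕ) : ℝ)

lemma periodic_of_SB_eq_zero {B : ℕ} {rhohat : ℤ → ℂ} (hS : SB B rhohat = 0) {k : ℤ}
    (h1 : 1 ≤ k) (h2 : k ≤ 2 * B) : rhohat k = rhohat (k - (2 * B + 1)) := by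
  unfold SB at hS
  rw [Finset.sum_eq_zero_iff_of_nonneg] at hS
  · have h := hS k (Finset.mem_Icc.mpr ⟨h1, h2⟩)
    have hk : (0 : ℤ) < k * ((2 * B + 1 : ℤ) - k) := mul_pos (by omega) (by omega)
    have hk' : ((k * ((2 * B + 1 : ℤ) - k) : ℤ) : ℝ) ≠ 0 := by exact_mod_cast hk.ne'
    have hn : ((2 * B + 1 : ℕ) : ℝ) ≠ 0 := by positivity
    rw [div_eq_zero_iff, or_iff_left hn, mul_eq_zero, or_iff_left hk', sq_eq_zero_iff,
      norm_eq_zero, sub_eq_zero] at h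
    rw [h]
    congr 1
    ring
  · intro k hk
    rw [Finset.mem_Icc] at hk
    have hk' : (0 : ℤ) ≤ k * ((2 * B + 1 : ℤ) - k) := mul_nonneg (by omega) (by omega)
    have : (0 : ℝ) ≤ ((k * ((2 * B + 1 : ℤ) - k) : ℤ) : ℝ) := by exact_mod_cast hk'
    positivity

/-- When `S_B(ρ̂) = 0`, the Toeplitz matrix is circulant; addition in `Fin (2B+1)` is modular. -/
lemma Tmat_add_one {B : ℕ} {rhohat : ℤ → ℂ} (hS : SB B rhohat = 0) (i j : Fin (2 * B + 1)) :
    Tmat B rhohat (i + 1) (j + 1) = Tmat B rhohat i j := by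
  have hi := i.isLt
  have hj := j.isLt
  simp only [Tmat, Matrix.of_apply, Fin.val_add_one, Fin.ext_iff, Fin.val_last]
  split_ifs with h1 h2 h2
  · rw [h1, h2]
    simp
  · rw [periodic_of_SB_eq_zero hS (k := (i : ℕ) - (j : ℕ)) (by omega) (by omega)]
    congr 1
    push_cast [h1]
    ring
  · rw [periodic_of_SB_eq_zero hS (k := ((i : ℕ) + 1 : ℕ) - (0 : ℕ)) (by omega) (by omega)]
    congr 1
    push_cast [h2]
    ring
  · congr 1
    push_cast
    ring

lemma geometric_of_shift {m : ℕ} {v : Fin (m + 1) → ℂ} {c : ℂ} (h : ∀ i, v (i + 1) = c * v i) :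
    (∀ i, v i = c ^ (i : ℕ) * v 0) ∧ v 0 = c ^ (m + 1) * v 0 := by
  have key : ∀ i, v i = c ^ (i : ℕ) * v 0 := by
    intro i
    induction i using Fin.induction with
    | zero => simp
    | succ i ih =>
      rw [← Fin.coeSucc_eq_succ, h, ih, Fin.coeSucc_eq_succ, Fin.val_succ, Fin.val_castSucc]
      ring
  refine ⟨key, ?_⟩
  have h0 := h (Fin.last m)
  rw [Fin.last_add_one, key (Fin.last m), Fin.val_last] at h0
  rw [pow_succ', mul_assoc]
  exact h0

lemma exists_exp_of_pow_eq_one {n : ℕ} (hn : n ≠ 0) {c : ℂ} (hc : c ^ n = 1) :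
    ∃ l < n, c = Complex.exp (-(2 * π * l / n) * Complex.I) := by
  have : NeZero n := ⟨hn⟩
  -- The sign convention of the exponent requires inverting `c`.
  obtain ⟨l, hl, h⟩ := (Complex.isPrimitiveRoot_exp n hn).eq_pow_of_pow_eq_one
    (ξ := c⁻¹) (by rw [inv_pow, hc, inv_one])
  refine ⟨l, hl, ?_⟩
  rw [← inv_inv c, ← h, ← Complex.exp_nat_mul, ← Complex.exp_neg]
  congr 1
  ring

/-- Intertwining with the conjugated cyclic shift `D_x̃ P D_x̃*`. -/
lemma mulVec_shift {B : ℕ} {rhohat : ℤ → ℂ} (hS : SB B rhohat = 0)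
    {xt : Fin (2 * B + 1) → ℂ} (hxx : ∀ i, conj (xt i) * xt i = 1) (a : ℂ)
    (u : Fin (2 * B + 1) → ℂ) (i : Fin (2 * B + 1)) :
    (a • (Matrix.diagonal xt * Tmat B rhohat * (Matrix.diagonal xt).conjTranspose)).mulVec
        (fun j => xt j * (conj (xt (j + 1)) * u (j + 1))) i =
      xt i * (conj (xt (i + 1)) *
        (a • (Matrix.diagonal xt * Tmat B rhohat *
          (Matrix.diagonal xt).conjTranspose)).mulVec u (i + 1)) := by
  simp only [Matrix.mulVec, dotProduct, Matrix.smul_apply, Matrix.diagonal_conjTranspose,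
    Matrix.mul_diagonal, Matrix.diagonal_mul, Pi.star_apply, smul_eq_mul]
  rw [← Equiv.sum_comp (Equiv.addRight (1 : Fin (2 * B + 1)))
    (fun j => a * (xt (i + 1) * Tmat B rhohat (i + 1) j * star (xt j)) * u j),
    Finset.mul_sum, Finset.mul_sum]
  refine Finset.sum_congr rfl fun j _ => ?_
  simp only [Equiv.coe_addRight, Tmat_add_one hS, ← starRingEnd_apply]
  linear_combination (a * xt i * Tmat B rhohat i j * conj (xt (j + 1)) * u (j + 1)) *
    (hxx j - hxx (i + 1))

/-- when `S_B(ρ̂) = 0` (so `T_ρ` is circulant), any unit-norm eigenvector of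
`M₂ = 2π D_x̃ T_ρ D_x̃*` for an eigenvalue with a one-dimensional eigenspace equals
`(α/√n)·e^{-ι2πlk/n}·x̃[k]` for some `l ∈ {0,…,n-1}` and some unimodular `α`. -/
theorem stmt_4 (B : ℕ) (hB : 1 ≤ B) (rhohat : ℤ → ℂ)
    (hρsym : ∀ k ∈ Finset.Icc (-(2 * B : ℤ)) (2 * B : ℤ), rhohat (-k) = conj (rhohat k))
    (hS : SB B rhohat = 0)
    (xt : Fin (2 * B + 1) → ℂ) (hxt : ∀ i, ‖xt i‖ = 1)
    (M₂ : Matrix (Fin (2 * B + 1)) (Fin (2 * B + 1)) ℂ)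
    (hM₂ : M₂ = ((2 * π : ℝ) : ℂ) •
      (Matrix.diagonal xt * Tmat B rhohat * (Matrix.diagonal xt).conjTranspose))
    (lam : ℂ)
    (hdim : Module.finrank ℂ (Module.End.eigenspace (Matrix.mulVecLin M₂) lam) = 1)
    (u : Fin (2 * B + 1) → ℂ)
    (hu : M₂.mulVec u = lam • u)
    (hunorm : ∑ i, ‖u i‖ ^ 2 = 1) :
    ∃ l < 2 * B + 1, ∃ α : ℂ, ‖α‖ = 1 ∧
      ∀ i : Fin (2 * B + 1),
        u i = α / (Real.sqrt ((2 * B + 1 : ℕ) : ℝ) : ℂ) *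
          Complex.exp (-((phase B l i : ℝ) : ℂ) * Complex.I) * xt i := by
  have hxx : ∀ i, conj (xt i) * xt i = 1 := fun i => by
    rw [Complex.conj_mul', hxt i]
    simp
  have hu0 : u ≠ 0 := by
    rintro rfl
    simp at hunorm
  obtain ⟨c, hc⟩ : ∃ c : ℂ, ∀ i, xt i * (conj (xt (i + 1)) * u (i + 1)) = c * u i := by
    have hmem : u ∈ Module.End.eigenspace (Matrix.mulVecLin M₂) lam := by
      rw [Module.End.mem_eigenspace_iff, Matrix.mulVecLin_apply, hu]
    have hmem' : (fun i => xt i * (conj (xt (i + 1)) * u (i + 1))) ∈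
        Module.End.eigenspace (Matrix.mulVecLin M₂) lam := by
      rw [Module.End.mem_eigenspace_iff, Matrix.mulVecLin_apply]
      funext i
      have h := mulVec_shift hS hxx ((2 * π : ℝ) : ℂ) u i
      rw [← hM₂, hu] at h
      rw [h]
      simp only [Pi.smul_apply, smul_eq_mul]
      ring
    obtain ⟨c, hc⟩ := (finrank_eq_one_iff_of_nonzero'
      (⟨u, hmem⟩ : Module.End.eigenspace (Matrix.mulVecLin M₂) lam)
      (by simpa [Subtype.ext_iff] using hu0)).mp hdim ⟨_, hmem'⟩
    refine ⟨c, fun i => ?_⟩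
    have h := congrFun (congrArg Subtype.val hc) i
    simpa using h.symm
  -- `v` is the demodulated vector `D_x̃* u`.
  obtain ⟨v, hv⟩ : ∃ v : Fin (2 * B + 1) → ℂ, ∀ i, v i = conj (xt i) * u i := ⟨_, fun _ => rfl⟩
  have huv : ∀ i, u i = v i * xt i := fun i => by
    rw [hv]
    linear_combination -u i * hxx i
  obtain ⟨hgeo, hper⟩ := geometric_of_shift (v := v) (c := c) fun i => by
    rw [hv, hv]
    linear_combination conj (xt i) * hc i - conj (xt (i + 1)) * u (i + 1) * hxx i
  have hv0 : v 0 ≠ 0 := fun h0 => hu0 <| by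
    funext i
    rw [huv, hgeo, h0]
    simp
  have hcn : c ^ (2 * B + 1) = 1 := by
    refine mul_right_cancel₀ hv0 ?_
    rw [one_mul]
    exact hper.symm
  obtain ⟨l, hl, hcl⟩ := exists_exp_of_pow_eq_one (Nat.succ_ne_zero _) hcn
  have hcnorm : ‖c‖ = 1 := Complex.norm_eq_one_of_pow_eq_one hcn (Nat.succ_ne_zero _)
  have hnorm : ((2 * B + 1 : ℕ) : ℝ) * ‖v 0‖ ^ 2 = 1 := by
    rw [← hunorm, Finset.sum_congr rfl fun i _ => show ‖u i‖ ^ 2 = ‖v 0‖ ^ 2 by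
      rw [huv, hgeo, norm_mul, norm_mul, norm_pow, hcnorm, hxt]; simp]
    simp
  have hsq : Real.sqrt ((2 * B + 1 : ℕ) : ℝ) ≠ 0 := by positivity
  have hsqC : (Real.sqrt ((2 * B + 1 : ℕ) : ℝ) : ℂ) ≠ 0 := by exact_mod_cast hsq
  -- The factor `c ^ B` accounts for the index shift `k = i - B`.
  refine ⟨l, hl, Real.sqrt ((2 * B + 1 : ℕ) : ℝ) * v 0 * c ^ B, ?_, fun i => ?_⟩
  · rw [norm_mul, norm_mul, norm_pow, hcnorm, one_pow, mul_one, Complex.norm_real,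
      Real.norm_of_nonneg (Real.sqrt_nonneg _),
      ← sq_eq_sq₀ (by positivity) zero_le_one, mul_pow, Real.sq_sqrt (by positivity), hnorm,
      one_pow]
  · have hexp : c ^ (i : ℕ) = c ^ B * Complex.exp (-((phase B l i : ℝ) : ℂ) * Complex.I) := by
      rw [hcl, ← Complex.exp_nat_mul, ← Complex.exp_nat_mul, ← Complex.exp_add]
      congr 1
      unfold phase
      push_cast
      ring
    rw [huv, hgeo, hexp]
    field_simp
end

section
/- Let x̂ ∈ ℂⁿ be non-vanishing with x̂[−k] = conj(x̂[k]), set P[k] = |x̂[k]|², P_max = max_k P[k], and x̃[k] = x̂[k]/|x̂[k]|. Let ρ̂ : {−2B,…,2B} → ℂ satisfy ρ̂[−k] = conj(ρ̂[k]). Set M₂ = 2π·D_x̃·T_ρ·D_x̃* and M₂^C = 2π·D_x̃·C_{v_opt}·D_x̃*. Let λ^T_0 ≥ … ≥ λ^T_{n−1} and λ^C_0 ≥ … ≥ λ^C_{n−1} be the eigenvalues, with multiplicity and in nonincreasing order, of the Hermitian matrices T_ρ and C_{v_opt} respectively, and fix an index κ such that both λ^T_κ and λ^C_κ have one-dimensional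 eigenspaces. Put δ_κ = max( min_{j≠κ} |λ^C_κ − λ^T_j| , min_{j≠κ} |λ^C_j − λ^T_κ| ) and assume S_B(ρ̂) ≤ δ_κ². Let v^T be a unit-norm eigenvector of M₂ for the eigenvalue 2πλ^T_κ, let l ∈ {0,…,n−1} be such that v^C := (1/√n)·Φ_{2πl/n}⊙x̃ is a unit-norm eigenvector of M₂^C for the eigenvalue 2πλ^C_κ, and let β ∈ ℂ with |β| = 1 be such that, setting x̃_est = β·√n·v^T, the number Σ_{k=−B}^{B} conj(x̃_est[k])·e^{−ι2πlk/n}·x̃[k] is a nonnegative real. Then ‖ √P ⊙ x̃_est − Φ_{2πl/n} ⊙ x̂ ‖² ≤ 2n·P_max·( 1 − √( 1 − S_B(ρ̂)/δ_κ² ) ), where √P is the entrywise square root of P. -/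
/-!
Conjugation by the unitary `D_x̃` reduces everything to unit eigenvectors `u`, `w` of the Hermitian
matrices `T = T_ρ` and `C = C_{v_opt}`, with `⟨u, w⟩ = ⟨v^T, v^C⟩`. The proof is a Davis-Kahan argument:

* if `δ_κ` is the distance from `λ^C_κ` to the eigenvalues `λ^T_j`, `j ≠ κ`, then
  `(T - λ^C_κ) w = (T - C) w`; expanding `w` in an eigenbasis of `T` gives
  `δ_κ² (1 - |⟨u, w⟩|²) ≤ ‖(T - C) w‖²` (`gap_sq_mul_le`), and symmetrically in the other case;
* `‖(T - C) w‖² ≤ ‖T - C‖² = S_B(ρ̂)` in Frobenius norm (`norm_mulVec_sq_le`, `sum_norm_sub_eq_SB`).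

Hence `|⟨u, w⟩| ≥ √(1 - S_B / δ_κ²)` (`sqrt_le_norm_inner`). The phase `β` makes
`⟨x̃_est, Φ ⊙ x̃⟩` equal to `n |⟨u, w⟩|`, so `‖x̃_est - Φ ⊙ x̃‖² = 2n (1 - |⟨u, w⟩|)`; multiplying the
entries by `√P[k] ≤ √P_max` gives the bound.
-/

open Complex Real ComplexConjugate

/-- The index of `-k` when `i : Fin (2B+1)` represents `k = i - B ∈ {-B,…,B}`. -/
def negIdx (B : ℕ) (i : Fin (2 * B + 1)) : Fin (2 * B + 1) :=
  ⟨2 * B - (i : ℕ), by omega⟩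

/-- A nonincreasing enumeration of the roots of a polynomial is unique. -/
theorem eq_of_antitone_of_prod_eq {n : ℕ} {f g : Fin n → ℝ} (hf : Antitone f) (hg : Antitone g)
    (h : ∏ i, (Polynomial.X - Polynomial.C ((f i : ℝ) : ℂ)) =
      ∏ i, (Polynomial.X - Polynomial.C ((g i : ℝ) : ℂ))) : f = g := by
  have key : ∀ f : Fin n → ℝ,
      (∏ i, (Polynomial.X - Polynomial.C ((f i : ℝ) : ℂ))).roots.map Complex.re =
        (List.ofFn f : Multiset ℝ) := by
    intro f
    rw [Polynomial.roots_prod _ _ (Finset.prod_ne_zero_iff.2 fun i _ => Polynomial.X_sub_C_ne_zero _)]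
    simp [Fin.univ_val_map, Function.comp_def]
  have h2 := key f
  rw [h, key g, Multiset.coe_eq_coe] at h2
  exact (List.ofFn_injective (List.Perm.eq_of_sortedGE hg.sortedGE_ofFn hf.sortedGE_ofFn h2)).symm

/-- An orthonormal eigenbasis indexed so that the `j`-th vector belongs to `lam j`, for the sorted
eigenvalues `lam` read off from the characteristic polynomial. -/
theorem exists_eigenbasis {n : ℕ} {A : Matrix (Fin n) (Fin n) ℂ} (hA : A.IsHermitian)
    {lam : Fin n → ℝ} (hmono : Antitone lam)
    (hchar : A.charpoly = ∏ i, (Polynomial.X - Polynomial.C ((lam i : ℝ) : ℂ))) :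
    ∃ b : OrthonormalBasis (Fin n) ℂ (EuclideanSpace ℂ (Fin n)),
      ∀ j, A.mulVec (b j) = ((lam j : ℝ) : ℂ) • (b j).ofLp := by
  set σ := Tuple.sort (OrderDual.toDual ∘ hA.eigenvalues) with hσ
  have hanti : Antitone (hA.eigenvalues ∘ σ) := Tuple.monotone_sort (OrderDual.toDual ∘ hA.eigenvalues)
  have heq : hA.eigenvalues ∘ σ = lam := by
    refine eq_of_antitone_of_prod_eq hanti hmono ?_
    rw [← hchar, hA.charpoly_eq]
    exact Equiv.prod_comp σ
      (fun i => (Polynomial.X - Polynomial.C ((hA.eigenvalues i : ℝ) : ℂ)))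
  refine ⟨hA.eigenvectorBasis.reindex σ.symm, fun j => ?_⟩
  have := hA.mulVec_eigenvectorBasis (σ j)
  simp only [OrthonormalBasis.reindex_apply, Equiv.symm_symm, ← heq, Function.comp_apply]
  rw [this]
  ext i; simp

theorem exists_unit_smul {n : ℕ} {A : Matrix (Fin n) (Fin n) ℂ} {μ : ℂ}
    (hdim : Module.finrank ℂ (Module.End.eigenspace (Matrix.mulVecLin A) μ) = 1)
    {u w : EuclideanSpace ℂ (Fin n)} (hu : A.mulVec u = μ • u.ofLp) (hw : A.mulVec w = μ • w.ofLp)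
    (hun : ‖u‖ = 1) (hwn : ‖w‖ = 1) : ∃ c : ℂ, ‖c‖ = 1 ∧ u = c • w := by
  have hw0 : w ≠ 0 := by rintro rfl; simp at hwn
  let u' : Module.End.eigenspace (Matrix.mulVecLin A) μ :=
    ⟨u.ofLp, Module.End.mem_eigenspace_iff.2 (by simpa using hu)⟩
  let w' : Module.End.eigenspace (Matrix.mulVecLin A) μ :=
    ⟨w.ofLp, Module.End.mem_eigenspace_iff.2 (by simpa using hw)⟩
  have hw'0 : w' ≠ 0 := fun h => hw0 (by
    ext i; exact congrFun (congrArg Subtype.val h) i)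
  obtain ⟨c, hc⟩ := exists_smul_eq_of_finrank_eq_one hdim hw'0 u'
  have hcu : u = c • w := by
    ext i; exact (congrFun (congrArg Subtype.val hc) i).symm
  refine ⟨c, ?_, hcu⟩
  rw [hcu, norm_smul, hwn, mul_one] at hun
  exact hun

/-- On a one-dimensional eigenspace, the modulus of the overlap with a fixed vector does not depend on
the choice of unit eigenvector. -/
theorem norm_inner_eq_of_finrank_one {n : ℕ} {A : Matrix (Fin n) (Fin n) ℂ} {μ : ℂ}
    (hdim : Module.finrank ℂ (Module.End.eigenspace (Matrix.mulVecLin A) μ) = 1)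
    {u e : EuclideanSpace ℂ (Fin n)} (hu : A.mulVec u = μ • u.ofLp) (he : A.mulVec e = μ • e.ofLp)
    (hun : ‖u‖ = 1) (hen : ‖e‖ = 1) (w : EuclideanSpace ℂ (Fin n)) :
    ‖inner ℂ u w‖ = ‖inner ℂ e w‖ := by
  obtain ⟨c, hc, rfl⟩ := exists_unit_smul hdim hu he hun hen
  rw [inner_smul_left, norm_mul, RCLike.norm_conj, hc, one_mul]

/-- Davis-Kahan estimate for a single eigenvector: if `μ` is at distance at least `δ` from all
eigenvalues of `A` other than `lam κ`, the residual `A w - μ w` controls the part of `w` orthogonal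
to the eigenvector `u`. This is read off coordinatewise in an eigenbasis of `A`, where the residual
has coordinates `(lam j - μ) ⟨b j, w⟩`. -/
theorem gap_sq_mul_le {n : ℕ} {A : Matrix (Fin n) (Fin n) ℂ} (hA : A.IsHermitian)
    {lam : Fin n → ℝ} (hmono : Antitone lam)
    (hchar : A.charpoly = ∏ i, (Polynomial.X - Polynomial.C ((lam i : ℝ) : ℂ)))
    (κ : Fin n)
    (hdim : Module.finrank ℂ
      (Module.End.eigenspace (Matrix.mulVecLin A) ((lam κ : ℝ) : ℂ)) = 1)
    {u w : EuclideanSpace ℂ (Fin n)} (hu : A.mulVec u = ((lam κ : ℝ) : ℂ) • u.ofLp)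
    (hun : ‖u‖ = 1) (hwn : ‖w‖ = 1) {μ δ : ℝ} (hδ : 0 ≤ δ)
    (hgap : ∀ j, j ≠ κ → δ ≤ |μ - lam j|) :
    δ ^ 2 * (1 - ‖inner ℂ u w‖ ^ 2) ≤
      ‖WithLp.toLp 2 (A.mulVec w.ofLp - (μ : ℂ) • w.ofLp)‖ ^ 2 := by
  obtain ⟨b, hb⟩ := exists_eigenbasis hA hmono hchar
  have hcoef : ∀ j, inner ℂ (b j) (WithLp.toLp 2 (A.mulVec w.ofLp - (μ : ℂ) • w.ofLp)) =
      ((lam j - μ : ℝ) : ℂ) * inner ℂ (b j) w := by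
    intro j
    have h1 : inner ℂ (b j) (WithLp.toLp 2 (A.mulVec w.ofLp)) =
        ((lam j : ℝ) : ℂ) * inner ℂ (b j) w := by
      have hsym := (Matrix.isSymmetric_toEuclideanLin_iff.mpr hA) (b j) w
      have e1 : Matrix.toEuclideanLin A (b j) = ((lam j : ℝ) : ℂ) • b j := by
        ext i; simpa using congrFun (hb j) i
      have e2 : Matrix.toEuclideanLin A w = WithLp.toLp 2 (A.mulVec w.ofLp) := rfl
      rw [← e2, ← hsym, e1, inner_smul_left]
      simp
    have h2 : WithLp.toLp 2 (A.mulVec w.ofLp - (μ : ℂ) • w.ofLp) =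
        WithLp.toLp 2 (A.mulVec w.ofLp) - (μ : ℂ) • w := by ext i; simp
    rw [h2, inner_sub_right, h1, inner_smul_right]
    push_cast; ring
  rw [norm_inner_eq_of_finrank_one hdim hu (hb κ) hun (b.norm_eq_one κ) w,
    ← b.sum_sq_norm_inner_right (WithLp.toLp 2 _), ← one_pow (M := ℝ) 2, ← hwn,
    ← b.sum_sq_norm_inner_right w, ← Finset.add_sum_erase _ _ (Finset.mem_univ κ),
    add_sub_cancel_left, Finset.mul_sum]
  refine (Finset.sum_le_sum fun j hj => ?_).trans
    (Finset.sum_le_univ_sum_of_nonneg (s := Finset.univ.erase κ) fun j => by positivity)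
  rw [hcoef, norm_mul, mul_pow]
  gcongr
  rw [Complex.norm_real, Real.norm_eq_abs, abs_sub_comm]
  exact hgap j (Finset.ne_of_mem_erase hj)

/-- The Frobenius norm dominates the operator norm. -/
theorem norm_mulVec_sq_le {n : ℕ} (A : Matrix (Fin n) (Fin n) ℂ) (w : Fin n → ℂ)
    (hw : ∑ i, ‖w i‖ ^ 2 = 1) :
    ∑ i, ‖A.mulVec w i‖ ^ 2 ≤ ∑ i, ∑ j, ‖A i j‖ ^ 2 := by
  refine Finset.sum_le_sum fun i _ => ?_
  calc ‖A.mulVec w i‖ ^ 2 ≤ (∑ j, ‖A i j‖ * ‖w j‖) ^ 2 := by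
        gcongr
        simp only [Matrix.mulVec, dotProduct, ← norm_mul]
        exact norm_sum_le _ _
    _ ≤ (∑ j, ‖A i j‖ ^ 2) * ∑ j, ‖w j‖ ^ 2 := Finset.sum_mul_sq_le_sq_mul_sq _ _ _
    _ = _ := by rw [hw, mul_one]

theorem Tmat_isHermitian {B : ℕ} {rhohat : ℤ → ℂ}
    (hρsym : ∀ k ∈ Finset.Icc (-(2 * B : ℤ)) (2 * B : ℤ), rhohat (-k) = conj (rhohat k)) :
    (Tmat B rhohat).IsHermitian := by
  ext i j
  simp only [Matrix.conjTranspose_apply, Tmat, Matrix.of_apply]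
  rw [← starRingEnd_apply, ← hρsym _ (by rw [Finset.mem_Icc]; omega), neg_sub]

theorem Cmat_isHermitian {B : ℕ} {rhohat : ℤ → ℂ}
    (hρsym : ∀ k ∈ Finset.Icc (-(2 * B : ℤ)) (2 * B : ℤ), rhohat (-k) = conj (rhohat k)) :
    (Cmat B (vopt B rhohat)).IsHermitian := by
  have key : ∀ k : Fin (2 * B + 1), conj (vopt B rhohat (-k)) = vopt B rhohat k := by
    intro k
    by_cases hk : k = 0
    · subst hk
      have := hρsym 0 (by rw [Finset.mem_Icc]; omega)
      simp only [vopt, neg_zero, Fin.coe_ofNat_eq_mod, Nat.zero_mod] at *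
      simp [← this, Complex.conj_ofNat]
    · have hk0 : (k : ℕ) ≠ 0 := fun h => hk (Fin.ext h)
      have hv : ((-k : Fin (2 * B + 1)) : ℕ) = 2 * B + 1 - k := by
        rw [Fin.val_neg', Nat.mod_eq_of_lt (by omega)]
      have hv' : (((-k : Fin (2 * B + 1)) : ℕ) : ℤ) = 2 * B + 1 - (k : ℕ) := by omega
      have h1 := hρsym (2 * B + 1 - (k : ℕ)) (by rw [Finset.mem_Icc]; omega)
      have h2 := hρsym (-(k : ℕ)) (by rw [Finset.mem_Icc]; omega)
      have h3 : (2 * B + 1 : ℤ) - (2 * B + 1 - (k : ℕ)) = (k : ℕ) := by ring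
      simp only [vopt, hv', h3, map_div₀, map_add, map_mul, Complex.conj_natCast,
        map_intCast, ← h1, ← h2, neg_neg]
      ring
  ext i j
  simp only [Matrix.conjTranspose_apply, Cmat, Matrix.of_apply]
  rw [← starRingEnd_apply, ← neg_sub i j, key]

/-- `‖T_ρ - C_{v_opt}‖² = S_B(ρ̂)` in Frobenius norm. On the cyclic diagonal `i - j ≡ k (mod n)`, with
`Δ = ρ̂[k] - ρ̂[k - n]`, there are `k` entries of modulus `|Δ| (n - k) / n` (those with `i < k`) and
`n - k` entries of modulus `|Δ| k / n`. -/
theorem sum_norm_sub_eq_SB (B : ℕ) (rhohat : ℤ → ℂ) :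
    ∑ i, ∑ j, ‖(Tmat B rhohat - Cmat B (vopt B rhohat)) i j‖ ^ 2 = SB B rhohat := by
  have h0 : ∀ i : Fin (2 * B + 1),
      ∑ j, ‖(Tmat B rhohat - Cmat B (vopt B rhohat)) i j‖ ^ 2 =
      ∑ k, ‖(Tmat B rhohat - Cmat B (vopt B rhohat)) i (i - k)‖ ^ 2 := fun i =>
    (Equiv.sum_comp (Equiv.subLeft i)
      (fun j => ‖(Tmat B rhohat - Cmat B (vopt B rhohat)) i j‖ ^ 2)).symm
  -- Reindexing by the cyclic difference `k = i - j` groups the entries by circulant diagonals.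
  simp_rw [h0]
  rw [Finset.sum_comm]
  have hn : (0 : ℝ) < 2 * (B : ℝ) + 1 := by positivity
  have hnC : (2 * (B : ℂ) + 1) ≠ 0 := by exact_mod_cast hn.ne'
  have h1 : ∀ k : Fin (2 * B + 1),
      ∑ i, ‖(Tmat B rhohat - Cmat B (vopt B rhohat)) i (i - k)‖ ^ 2 =
      ‖rhohat (k : ℕ) - rhohat (-((2 * B + 1 : ℤ) - (k : ℕ)))‖ ^ 2 *
      (((k : ℕ) * ((2 * B + 1 : ℤ) - (k : ℕ)) : ℤ) : ℝ) / ((2 * B + 1 : ℕ) : ℝ) := by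
    intro k
    set Δ := rhohat (k : ℕ) - rhohat (-((2 * B + 1 : ℤ) - (k : ℕ))) with hΔ
    have hk := k.isLt
    have hkR : ((k : ℕ) : ℝ) ≤ 2 * B + 1 := by exact_mod_cast hk.le
    have hent : ∀ i : Fin (2 * B + 1),
        ‖(Tmat B rhohat - Cmat B (vopt B rhohat)) i (i - k)‖ ^ 2 =
        if i < k then ‖Δ‖ ^ 2 * ((2 * B + 1 - (k : ℕ)) / (2 * B + 1)) ^ 2
        else ‖Δ‖ ^ 2 * ((k : ℕ) / (2 * B + 1)) ^ 2 := by
      intro i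
      simp only [Matrix.sub_apply, Tmat, Cmat, Matrix.of_apply, sub_sub_cancel]
      split_ifs with hik
      · have hv : (((i - k : Fin (2 * B + 1)) : ℕ) : ℤ) = i - k + (2 * B + 1) := by
          rw [Fin.coe_sub_iff_lt.2 hik]; have := Fin.lt_def.1 hik; omega
        have e : rhohat ((i : ℕ) - ((i - k : Fin (2 * B + 1)) : ℕ)) - vopt B rhohat k =
            -Δ * (((2 * B + 1 - (k : ℕ)) / (2 * B + 1) : ℝ) : ℂ) := by
          rw [hv, show (i : ℤ) - (i - k + (2 * B + 1)) = -((2 * B + 1 : ℤ) - (k : ℕ)) by ring, hΔ,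
            vopt]
          push_cast
          field_simp
          ring
        rw [e, norm_mul, norm_neg, mul_pow, Complex.norm_real, Real.norm_eq_abs, sq_abs]
      · have hv : (((i - k : Fin (2 * B + 1)) : ℕ) : ℤ) = i - k := by
          rw [Fin.sub_val_of_le (not_lt.1 hik)]; have := Fin.le_def.1 (not_lt.1 hik); omega
        have e : rhohat ((i : ℕ) - ((i - k : Fin (2 * B + 1)) : ℕ)) - vopt B rhohat k =
            Δ * (((k : ℕ) / (2 * B + 1) : ℝ) : ℂ) := by
          rw [hv, sub_sub_cancel, hΔ, vopt]
          push_cast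
          field_simp
          ring
        rw [e, norm_mul, mul_pow, Complex.norm_real, Real.norm_eq_abs, sq_abs]
    simp_rw [hent]
    have hc1 : (Finset.univ.filter fun i : Fin (2 * B + 1) => i < k).card = (k : ℕ) := by
      rw [← Fin.card_Iio]; congr 1; ext; simp
    have hc2 : (Finset.univ.filter fun i : Fin (2 * B + 1) => ¬ i < k).card =
        2 * B + 1 - (k : ℕ) := by
      rw [← Fin.card_Ici]; congr 1; ext; simp
    rw [Finset.sum_ite, Finset.sum_const, Finset.sum_const, hc1, hc2, nsmul_eq_mul, nsmul_eq_mul,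
      Nat.cast_sub hk.le]
    push_cast
    field_simp
    ring
  simp_rw [h1]
  rw [Fin.sum_univ_eq_sum_range (fun k : ℕ => ‖rhohat k - rhohat (-((2 * B + 1 : ℤ) - k))‖ ^ 2 *
      ((k * ((2 * B + 1 : ℤ) - k) : ℤ) : ℝ) / ((2 * B + 1 : ℕ) : ℝ)) (2 * B + 1),
    Finset.sum_range_succ']
  simp only [Nat.cast_zero, zero_mul, Int.cast_zero, mul_zero, zero_div, add_zero]
  rw [SB]
  refine Finset.sum_bij (fun k _ => ((k + 1 : ℕ) : ℤ)) ?_ ?_ ?_ ?_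
  · intro k hk; rw [Finset.mem_range] at hk; rw [Finset.mem_Icc]; omega
  · intro a _ b _ h; omega
  · intro b hb
    rw [Finset.mem_Icc] at hb
    exact ⟨(b - 1).toNat, by rw [Finset.mem_range]; omega, by omega⟩
  · intro k hk; rfl

/-- Lower bound on the overlap of the simple eigenvectors of `T_ρ` and `C_{v_opt}`. -/
theorem sqrt_le_norm_inner {B : ℕ} {rhohat : ℤ → ℂ}
    (hρsym : ∀ k ∈ Finset.Icc (-(2 * B : ℤ)) (2 * B : ℤ), rhohat (-k) = conj (rhohat k))
    {lamT lamC : Fin (2 * B + 1) → ℝ} (hlamT : Antitone lamT) (hlamC : Antitone lamC)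
    (hlamTchar : (Tmat B rhohat).charpoly =
      ∏ i : Fin (2 * B + 1), (Polynomial.X - Polynomial.C ((lamT i : ℝ) : ℂ)))
    (hlamCchar : (Cmat B (vopt B rhohat)).charpoly =
      ∏ i : Fin (2 * B + 1), (Polynomial.X - Polynomial.C ((lamC i : ℝ) : ℂ)))
    (κ : Fin (2 * B + 1))
    (hκT : Module.finrank ℂ
      (Module.End.eigenspace (Matrix.mulVecLin (Tmat B rhohat)) ((lamT κ : ℝ) : ℂ)) = 1)
    (hκC : Module.finrank ℂ
      (Module.End.eigenspace (Matrix.mulVecLin (Cmat B (vopt B rhohat))) ((lamC κ : ℝ) : ℂ)) = 1)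
    {δκ : ℝ}
    (hδκ : δκ = max
      (sInf {r : ℝ | ∃ j : Fin (2 * B + 1), j ≠ κ ∧ r = |lamC κ - lamT j|})
      (sInf {r : ℝ | ∃ j : Fin (2 * B + 1), j ≠ κ ∧ r = |lamC j - lamT κ|}))
    (hgap : SB B rhohat ≤ δκ ^ 2)
    {u w : EuclideanSpace ℂ (Fin (2 * B + 1))}
    (hu : (Tmat B rhohat).mulVec u = ((lamT κ : ℝ) : ℂ) • u.ofLp)
    (hw : (Cmat B (vopt B rhohat)).mulVec w = ((lamC κ : ℝ) : ℂ) • w.ofLp)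
    (hun : ‖u‖ = 1) (hwn : ‖w‖ = 1) :
    Real.sqrt (1 - SB B rhohat / δκ ^ 2) ≤ ‖inner ℂ u w‖ := by
  set T := Tmat B rhohat with hT
  set C := Cmat B (vopt B rhohat) with hC
  have hTH : T.IsHermitian := Tmat_isHermitian hρsym
  have hCH : C.IsHermitian := Cmat_isHermitian hρsym
  have hSB : ∑ i, ∑ j, ‖(T - C) i j‖ ^ 2 = SB B rhohat := sum_norm_sub_eq_SB B rhohat
  have hinf : ∀ f : Fin (2 * B + 1) → ℝ,
      0 ≤ sInf {r : ℝ | ∃ j : Fin (2 * B + 1), j ≠ κ ∧ r = |f j|} ∧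
      ∀ j, j ≠ κ → sInf {r : ℝ | ∃ j : Fin (2 * B + 1), j ≠ κ ∧ r = |f j|} ≤ |f j| := by
    intro f
    refine ⟨Real.sInf_nonneg ?_, fun j hj => csInf_le ⟨0, ?_⟩ ⟨j, hj, rfl⟩⟩
    · rintro _ ⟨j, _, rfl⟩; exact abs_nonneg _
    · rintro _ ⟨j, _, rfl⟩; exact abs_nonneg _
  have hperturb : ∀ v : EuclideanSpace ℂ (Fin (2 * B + 1)), ‖v‖ = 1 →
      ‖WithLp.toLp 2 ((T - C).mulVec v.ofLp)‖ ^ 2 ≤ SB B rhohat := by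
    intro v hv
    rw [EuclideanSpace.norm_sq_eq, ← hSB]
    refine norm_mulVec_sq_le _ _ ?_
    rw [← EuclideanSpace.norm_sq_eq, hv, one_pow]
  -- If the first minimum attains `δκ`, expand `w` in an eigenbasis of `T`; otherwise expand `u` in
  -- one of `C`.
  have hmain : δκ ^ 2 * (1 - ‖inner ℂ u w‖ ^ 2) ≤ SB B rhohat := by
    obtain ⟨h10, h1⟩ := hinf fun j => lamC κ - lamT j
    obtain ⟨h20, h2⟩ := hinf fun j => lamC j - lamT κ
    rcases max_choice (sInf {r : ℝ | ∃ j : Fin (2 * B + 1), j ≠ κ ∧ r = |lamC κ - lamT j|})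
      (sInf {r : ℝ | ∃ j : Fin (2 * B + 1), j ≠ κ ∧ r = |lamC j - lamT κ|}) with h | h
    · rw [h] at hδκ
      refine (gap_sq_mul_le hTH hlamT hlamTchar κ hκT hu hun hwn (hδκ ▸ h10)
        (fun j hj => hδκ ▸ h1 j hj)).trans ?_
      rw [← hw, ← Matrix.sub_mulVec]
      exact hperturb w hwn
    · rw [h] at hδκ
      rw [norm_inner_symm]
      refine (gap_sq_mul_le hCH hlamC hlamCchar κ hκC hw hwn hun (hδκ ▸ h20)
        (fun j hj => by rw [hδκ, abs_sub_comm]; exact h2 j hj)).trans ?_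
      rw [← hu, ← Matrix.sub_mulVec, ← neg_sub T C, Matrix.neg_mulVec, WithLp.toLp_neg, norm_neg]
      exact hperturb u hun
  rcases eq_or_ne δκ 0 with h0 | h0
  · -- Here `SB / δκ ^ 2 = 0` by the convention on division by zero, so the overlap has to be `1`.
    -- The hypothesis `SB ≤ 0` forces `T = C`, and then `u`, `w` span the same line.
    have hS0 : ∑ i, ∑ j, ‖(T - C) i j‖ ^ 2 = 0 := by
      refine le_antisymm ?_ (by positivity)
      rw [hSB]; simpa [h0] using hgap
    have hTC : T = C := by
      rw [← sub_eq_zero]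
      ext i j
      rw [Finset.sum_eq_zero_iff_of_nonneg (fun i _ => by positivity)] at hS0
      have hi := hS0 i (Finset.mem_univ i)
      rw [Finset.sum_eq_zero_iff_of_nonneg (fun i _ => by positivity)] at hi
      simpa using hi j (Finset.mem_univ j)
    have hlam : lamT = lamC := eq_of_antitone_of_prod_eq hlamT hlamC (by
      rw [← hlamTchar, ← hlamCchar, hTC])
    rw [← hTC, ← hlam] at hw
    rw [norm_inner_eq_of_finrank_one hκT hu hw hun hwn w, h0, inner_self_eq_norm_sq_to_K, hwn]
    simp
  · have hpos : 0 < δκ ^ 2 := by positivity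
    refine Real.sqrt_le_iff.2 ⟨norm_nonneg _, ?_⟩
    have : 1 - ‖inner ℂ u w‖ ^ 2 ≤ SB B rhohat / δκ ^ 2 := by
      rw [le_div_iff₀ hpos, mul_comm]; exact hmain
    linarith

/-- Undoing the conjugation by `D_d`: an eigenvector `v` of `2π D_d A D_d*` gives the eigenvector
`D_d* v` of `A`. -/
theorem mulVec_conj_of_conjugated {n : ℕ} {A : Matrix (Fin n) (Fin n) ℂ} {d v : Fin n → ℂ}
    {lam : ℝ} (hd : ∀ i, ‖d i‖ = 1)
    (h : (((2 * π : ℝ) : ℂ) • (Matrix.diagonal d * A * (Matrix.diagonal d).conjTranspose)).mulVec v =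
      ((2 * π * lam : ℝ) : ℂ) • v) :
    A.mulVec (fun i => conj (d i) * v i) = ((lam : ℝ) : ℂ) • fun i => conj (d i) * v i := by
  have hdd : ∀ i, conj (d i) * d i = 1 := fun i => by
    rw [mul_comm, Complex.mul_conj, Complex.normSq_eq_norm_sq, hd]; simp
  have hpi : ((2 * π : ℝ) : ℂ) ≠ 0 := by
    exact_mod_cast (by positivity : (2 * π : ℝ) ≠ 0)
  have hin : (Matrix.diagonal d).conjTranspose.mulVec v = fun i => conj (d i) * v i := by
    ext i; simp [Matrix.diagonal_conjTranspose, Matrix.mulVec_diagonal]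
  ext i
  have hi := congrFun h i
  rw [Matrix.smul_mulVec, ← Matrix.mulVec_mulVec, ← Matrix.mulVec_mulVec, hin] at hi
  simp only [Pi.smul_apply, smul_eq_mul, Matrix.mulVec_diagonal] at hi ⊢
  rw [Complex.ofReal_mul (2 * π) lam, mul_assoc] at hi
  have hi' := mul_left_cancel₀ hpi hi
  calc _ = (conj (d i) * d i) * A.mulVec (fun i => conj (d i) * v i) i := by rw [hdd, one_mul]
    _ = conj (d i) * (lam * v i) := by rw [mul_assoc, hi']
    _ = _ := by ring

/-- Theorem 3 of the paper: error bound of the 1-D spectral algorithm.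
The eigenvalues (with multiplicity, in nonincreasing order) of the Hermitian matrices
`T_ρ` and `C_{v_opt}` are encoded by their characteristic polynomials. -/
theorem stmt_5 (B : ℕ) (hB : 1 ≤ B)
    (xhat : Fin (2 * B + 1) → ℂ)
    (hxnv : ∀ i, xhat i ≠ 0)
    (hxsym : ∀ i, xhat (negIdx B i) = conj (xhat i))
    (xt : Fin (2 * B + 1) → ℂ) (hxt : ∀ i, xt i = xhat i / ((‖xhat i‖ : ℝ) : ℂ))
    (Pmax : ℝ)
    (hPmax : Pmax = Finset.univ.sup' ⟨⟨0, by omega⟩, Finset.mem_univ _⟩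
      (fun i : Fin (2 * B + 1) => ‖xhat i‖ ^ 2))
    (rhohat : ℤ → ℂ)
    (hρsym : ∀ k ∈ Finset.Icc (-(2 * B : ℤ)) (2 * B : ℤ), rhohat (-k) = conj (rhohat k))
    (M₂ M₂C : Matrix (Fin (2 * B + 1)) (Fin (2 * B + 1)) ℂ)
    (hM₂ : M₂ = ((2 * π : ℝ) : ℂ) •
      (Matrix.diagonal xt * Tmat B rhohat * (Matrix.diagonal xt).conjTranspose))
    (hM₂C : M₂C = ((2 * π : ℝ) : ℂ) •
      (Matrix.diagonal xt * Cmat B (vopt B rhohat) * (Matrix.diagonal xt).conjTranspose))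
    (lamT lamC : Fin (2 * B + 1) → ℝ)
    (hlamTmono : ∀ i j : Fin (2 * B + 1), i ≤ j → lamT j ≤ lamT i)
    (hlamCmono : ∀ i j : Fin (2 * B + 1), i ≤ j → lamC j ≤ lamC i)
    (hlamTchar : (Tmat B rhohat).charpoly =
      ∏ i : Fin (2 * B + 1), (Polynomial.X - Polynomial.C ((lamT i : ℝ) : ℂ)))
    (hlamCchar : (Cmat B (vopt B rhohat)).charpoly =
      ∏ i : Fin (2 * B + 1), (Polynomial.X - Polynomial.C ((lamC i : ℝ) : ℂ)))
    (κ : Fin (2 * B + 1))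
    (hκT : Module.finrank ℂ
      (Module.End.eigenspace (Matrix.mulVecLin (Tmat B rhohat)) ((lamT κ : ℝ) : ℂ)) = 1)
    (hκC : Module.finrank ℂ
      (Module.End.eigenspace (Matrix.mulVecLin (Cmat B (vopt B rhohat))) ((lamC κ : ℝ) : ℂ)) = 1)
    (δκ : ℝ)
    (hδκ : δκ = max
      (sInf {r : ℝ | ∃ j : Fin (2 * B + 1), j ≠ κ ∧ r = |lamC κ - lamT j|})
      (sInf {r : ℝ | ∃ j : Fin (2 * B + 1), j ≠ κ ∧ r = |lamC j - lamT κ|}))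
    (hgap : SB B rhohat ≤ δκ ^ 2)
    (vT : Fin (2 * B + 1) → ℂ)
    (hvT : M₂.mulVec vT = ((2 * π * lamT κ : ℝ) : ℂ) • vT)
    (hvTnorm : ∑ i, ‖vT i‖ ^ 2 = 1)
    (l : ℕ) (hl : l < 2 * B + 1)
    (vC : Fin (2 * B + 1) → ℂ)
    (hvC : ∀ i, vC i = ((1 / Real.sqrt ((2 * B + 1 : ℕ) : ℝ) : ℝ) : ℂ) *
      Complex.exp (-((phase B l i : ℝ) : ℂ) * Complex.I) * xt i)
    (hvCeig : M₂C.mulVec vC = ((2 * π * lamC κ : ℝ) : ℂ) • vC)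
    (hvCnorm : ∑ i, ‖vC i‖ ^ 2 = 1)
    (β : ℂ) (hβ : ‖β‖ = 1)
    (xtest : Fin (2 * B + 1) → ℂ)
    (hxtest : ∀ i, xtest i = β * ((Real.sqrt ((2 * B + 1 : ℕ) : ℝ) : ℝ) : ℂ) * vT i)
    (hpos : ∃ r : ℝ, 0 ≤ r ∧
      ∑ i, conj (xtest i) * (Complex.exp (-((phase B l i : ℝ) : ℂ) * Complex.I) * xt i) =
        (r : ℂ)) :
    ∑ i, ‖((Real.sqrt (‖xhat i‖ ^ 2) : ℝ) : ℂ) * xtest i -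
        Complex.exp (-((phase B l i : ℝ) : ℂ) * Complex.I) * xhat i‖ ^ 2 ≤
      2 * ((2 * B + 1 : ℕ) : ℝ) * Pmax * (1 - Real.sqrt (1 - SB B rhohat / δκ ^ 2)) := by
  have hxt1 : ∀ i, ‖xt i‖ = 1 := by
    intro i
    rw [hxt, norm_div, Complex.norm_real, norm_norm, div_self (norm_ne_zero_iff.2 (hxnv i))]
  have hexp : ∀ i, ‖Complex.exp (-((phase B l i : ℝ) : ℂ) * Complex.I)‖ = 1 := by
    intro i
    rw [← Complex.ofReal_neg]; exact Complex.norm_exp_ofReal_mul_I _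
  subst hM₂ hM₂C
  set N : ℝ := ((2 * B + 1 : ℕ) : ℝ) with hN
  have hNpos : 0 < N := by rw [hN]; positivity
  set g : Fin (2 * B + 1) → ℂ :=
    fun i => Complex.exp (-((phase B l i : ℝ) : ℂ) * Complex.I) * xt i with hg
  have hg1 : ∀ i, ‖g i‖ = 1 := fun i => by rw [hg]; simp only [norm_mul, hexp, hxt1, mul_one]
  set u : EuclideanSpace ℂ (Fin (2 * B + 1)) := WithLp.toLp 2 fun i => conj (xt i) * vT i with hu
  set w : EuclideanSpace ℂ (Fin (2 * B + 1)) := WithLp.toLp 2 fun i => conj (xt i) * vC i with hw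
  have hun : ‖u‖ = 1 := by
    rw [← sq_eq_sq₀ (norm_nonneg _) zero_le_one, EuclideanSpace.norm_sq_eq, one_pow, ← hvTnorm]
    simp [hu, hxt1]
  have hwn : ‖w‖ = 1 := by
    rw [← sq_eq_sq₀ (norm_nonneg _) zero_le_one, EuclideanSpace.norm_sq_eq, one_pow, ← hvCnorm]
    simp [hw, hxt1]
  have hbound := sqrt_le_norm_inner hρsym (fun i j h => hlamTmono i j h)
    (fun i j h => hlamCmono i j h) hlamTchar hlamCchar κ hκT hκC hδκ hgap
    (u := u) (w := w) (mulVec_conj_of_conjugated hxt1 hvT)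
    (mulVec_conj_of_conjugated hxt1 hvCeig) hun hwn
  obtain ⟨r, hr0, hr⟩ := hpos
  have hinner : inner ℂ u w = ∑ i, conj (vT i) * vC i := by
    rw [PiLp.inner_apply]
    refine Finset.sum_congr rfl fun i _ => ?_
    have hdd : xt i * conj (xt i) = 1 := by
      rw [Complex.mul_conj, Complex.normSq_eq_norm_sq, hxt1]; simp
    simp only [hu, hw, RCLike.inner_apply, map_mul, Complex.conj_conj]
    linear_combination (conj (vT i) * vC i) * hdd
  have hsq : ((Real.sqrt N : ℝ) : ℂ) ≠ 0 := by
    exact_mod_cast (Real.sqrt_pos.2 hNpos).ne'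
  have hgv : ∀ i, g i = ((Real.sqrt N : ℝ) : ℂ) * vC i := by
    intro i
    rw [hvC i, hg]
    push_cast
    field_simp
  -- The aligned correlation is the real number `n · |⟨u, w⟩|`.
  have hrval : r = N * ‖inner ℂ u w‖ := by
    have h1 : (r : ℂ) = conj β * (N : ℂ) * inner ℂ u w := by
      rw [← hr, hinner, Finset.mul_sum]
      refine Finset.sum_congr rfl fun i _ => ?_
      have hNN : ((Real.sqrt N : ℝ) : ℂ) * ((Real.sqrt N : ℝ) : ℂ) = (N : ℂ) := by
        rw [← Complex.ofReal_mul, Real.mul_self_sqrt hNpos.le]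
      have := hgv i
      simp only [hg] at this
      rw [this, hxtest, ← hNN]
      simp only [map_mul, Complex.conj_ofReal]
      ring
    have h2 := congrArg norm h1
    rw [norm_mul, norm_mul, RCLike.norm_conj, hβ, Complex.norm_real, Complex.norm_real,
      Real.norm_of_nonneg hr0, Real.norm_of_nonneg hNpos.le, one_mul] at h2
    exact h2
  have hest : ∑ i, ‖xtest i‖ ^ 2 = N := by
    simp only [hxtest, norm_mul, hβ, one_mul, mul_pow, Complex.norm_real, Real.norm_eq_abs, sq_abs,
      Real.sq_sqrt hNpos.le]
    rw [← Finset.mul_sum, hvTnorm, mul_one]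
  have hdist : ∑ i, ‖xtest i - g i‖ ^ 2 = 2 * N - 2 * r := by
    have h1 : ∀ i, ‖xtest i - g i‖ ^ 2 = ‖xtest i‖ ^ 2 + 1 - 2 * (conj (xtest i) * g i).re := by
      intro i
      rw [← Complex.normSq_eq_norm_sq, Complex.normSq_sub, Complex.normSq_eq_norm_sq,
        Complex.normSq_eq_norm_sq, hg1, ← Complex.conj_re (conj (xtest i) * g i)]
      simp
    simp_rw [h1]
    rw [Finset.sum_sub_distrib, Finset.sum_add_distrib, hest, ← Finset.mul_sum, ← Complex.re_sum, hr]
    simp [hN]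
    ring
  have hterm : ∀ i, ‖((Real.sqrt (‖xhat i‖ ^ 2) : ℝ) : ℂ) * xtest i -
        Complex.exp (-((phase B l i : ℝ) : ℂ) * Complex.I) * xhat i‖ ^ 2 ≤
      Pmax * ‖xtest i - g i‖ ^ 2 := by
    intro i
    have hx : xhat i = ((‖xhat i‖ : ℝ) : ℂ) * xt i := by
      rw [hxt]; field_simp [norm_ne_zero_iff.2 (hxnv i)]
    have e : ((Real.sqrt (‖xhat i‖ ^ 2) : ℝ) : ℂ) * xtest i -
        Complex.exp (-((phase B l i : ℝ) : ℂ) * Complex.I) * xhat i =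
        ((‖xhat i‖ : ℝ) : ℂ) * (xtest i - g i) := by
      rw [Real.sqrt_sq (norm_nonneg _), hg]
      linear_combination (-Complex.exp (-((phase B l i : ℝ) : ℂ) * Complex.I)) * hx
    rw [e, norm_mul, mul_pow, Complex.norm_real, norm_norm]
    gcongr
    rw [hPmax]
    exact Finset.le_sup' (fun i => ‖xhat i‖ ^ 2) (Finset.mem_univ i)
  have hP0 : 0 ≤ Pmax := by
    rw [hPmax]
    exact (sq_nonneg _).trans (Finset.le_sup' (fun i => ‖xhat i‖ ^ 2) (Finset.mem_univ κ))
  calc _ ≤ ∑ i, Pmax * ‖xtest i - g i‖ ^ 2 := Finset.sum_le_sum fun i _ => hterm i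
    _ = 2 * N * Pmax * (1 - ‖inner ℂ u w‖) := by
        rw [← Finset.mul_sum, hdist, hrval]; ring
    _ ≤ _ := by gcongr
end

section
/- Let x̃ ∈ ℂⁿ satisfy x̃[−k] = conj(x̃[k]) and let ρ̂ : {−2B,…,2B} → ℂ satisfy ρ̂[−k] = conj(ρ̂[k]); set M₂ = 2π·D_x̃·T_ρ·D_x̃*. (i) If v ∈ ℂⁿ satisfies M₂v = λv with λ ∈ ℝ, then the vector v′ defined by v′[k] = conj(v[−k]) also satisfies M₂v′ = λv′. (ii) If in addition the eigenspace of λ is one-dimensional and v[0] is a nonzero real number, then v[k] = conj(v[−k]) for all k ∈ {−B,…,B}. -/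
/-!
Let `J` be the index flip `k ↦ -k`. The symmetries of `x̃` and `ρ̂` give
`M₂[-k₁,-k₂] = conj M₂[k₁,k₂]` (`entry_negIdx`), so the antilinear map `v ↦ conj (v ∘ J)` commutes
with `M₂` and, `λ` being real, preserves its `λ`-eigenspace (`flip_eigenvector`). If that eigenspace
is a line, the flip of `v` is a multiple `c v`; both vectors take the same nonzero real value at
`k = 0`, so `c = 1`.
-/

open Complex Real ComplexConjugate

lemma negIdx_negIdx (B : ℕ) (i : Fin (2 * B + 1)) : negIdx B (negIdx B i) = i := by
  ext
  simp only [negIdx]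
  omega

lemma entry_negIdx (B : ℕ)
    (xt : Fin (2 * B + 1) → ℂ) (hxtsym : ∀ i, xt (negIdx B i) = conj (xt i))
    (rhohat : ℤ → ℂ)
    (hρsym : ∀ k ∈ Finset.Icc (-(2 * B : ℤ)) (2 * B : ℤ), rhohat (-k) = conj (rhohat k))
    (M : Matrix (Fin (2 * B + 1)) (Fin (2 * B + 1)) ℂ)
    (hM : M = ((2 * π : ℝ) : ℂ) •
      (Matrix.diagonal xt * Tmat B rhohat * (Matrix.diagonal xt).conjTranspose))
    (i j : Fin (2 * B + 1)) : M (negIdx B i) (negIdx B j) = conj (M i j) := by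
  have hentry : ∀ a b, M a b = ((2 * π : ℝ) : ℂ) *
      (xt a * rhohat (((a : ℕ) : ℤ) - ((b : ℕ) : ℤ)) * conj (xt b)) := by
    intro a b
    rw [hM, Matrix.diagonal_conjTranspose, Matrix.smul_apply, Matrix.mul_diagonal,
      Matrix.diagonal_mul]
    rfl
  have hflip : (((negIdx B i : Fin (2 * B + 1)) : ℕ) : ℤ) - ((negIdx B j : Fin (2 * B + 1)) : ℕ)
      = -(((i : ℕ) : ℤ) - ((j : ℕ) : ℤ)) := by
    simp only [negIdx]
    omega
  have hmem : ((i : ℕ) : ℤ) - ((j : ℕ) : ℤ) ∈ Finset.Icc (-(2 * B : ℤ)) (2 * B : ℤ) := by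
    rw [Finset.mem_Icc]
    omega
  rw [hentry, hentry, hflip, hρsym _ hmem, hxtsym, hxtsym]
  simp only [map_mul, Complex.conj_ofReal]

lemma flip_eigenvector (B : ℕ) (M : Matrix (Fin (2 * B + 1)) (Fin (2 * B + 1)) ℂ)
    (hM : ∀ i j, M (negIdx B i) (negIdx B j) = conj (M i j)) (lam : ℝ)
    (v : Fin (2 * B + 1) → ℂ) (hv : M.mulVec v = (lam : ℂ) • v) :
    M.mulVec (fun i => conj (v (negIdx B i))) = (lam : ℂ) • (fun i => conj (v (negIdx B i))) := by
  ext i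
  have h := congrArg conj (congrFun hv (negIdx B i))
  simp only [Matrix.mulVec, dotProduct, Pi.smul_apply, smul_eq_mul, map_mul, map_sum,
    Complex.conj_ofReal] at h ⊢
  rw [← h]
  refine Fintype.sum_equiv (Function.Involutive.toPerm (negIdx B) (negIdx_negIdx B)) _ _
    fun j => ?_
  change M i j * _ = conj (M (negIdx B i) (negIdx B j)) * conj (v (negIdx B j))
  rw [← hM, negIdx_negIdx, negIdx_negIdx]

/-- with conjugate-symmetric `x̃` and `ρ̂`, (i) eigenvectors of
`M₂ = 2π D_x̃ T_ρ D_x̃*` are stable under the conjugate-flip `v'[k] = conj (v[-k])`, and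
(ii) an eigenvector for a one-dimensional eigenspace with `v[0]` real and nonzero satisfies
`v[k] = conj (v[-k])`. -/
theorem stmt_6 (B : ℕ) (hB : 1 ≤ B)
    (xt : Fin (2 * B + 1) → ℂ) (hxtsym : ∀ i, xt (negIdx B i) = conj (xt i))
    (rhohat : ℤ → ℂ)
    (hρsym : ∀ k ∈ Finset.Icc (-(2 * B : ℤ)) (2 * B : ℤ), rhohat (-k) = conj (rhohat k))
    (M₂ : Matrix (Fin (2 * B + 1)) (Fin (2 * B + 1)) ℂ)
    (hM₂ : M₂ = ((2 * π : ℝ) : ℂ) •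
      (Matrix.diagonal xt * Tmat B rhohat * (Matrix.diagonal xt).conjTranspose))
    (lam : ℝ) :
    (∀ v : Fin (2 * B + 1) → ℂ, M₂.mulVec v = ((lam : ℝ) : ℂ) • v →
      M₂.mulVec (fun i => conj (v (negIdx B i))) =
        ((lam : ℝ) : ℂ) • (fun i => conj (v (negIdx B i)))) ∧
    (∀ v : Fin (2 * B + 1) → ℂ, M₂.mulVec v = ((lam : ℝ) : ℂ) • v →
      Module.finrank ℂ (Module.End.eigenspace (Matrix.mulVecLin M₂) ((lam : ℝ) : ℂ)) = 1 →
      (v ⟨B, by omega⟩).im = 0 → v ⟨B, by omega⟩ ≠ 0 →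
      ∀ i, v i = conj (v (negIdx B i))) := by
  have hM := entry_negIdx B xt hxtsym rhohat hρsym M₂ hM₂
  refine ⟨flip_eigenvector B M₂ hM lam, fun v hv hdim him hne i => ?_⟩
  have hmem : ∀ w : Fin (2 * B + 1) → ℂ, M₂.mulVec w = (lam : ℂ) • w →
      w ∈ Module.End.eigenspace (Matrix.mulVecLin M₂) (lam : ℂ) := fun w hw =>
    Module.End.mem_eigenspace_iff.2 hw
  have hv0 : (⟨v, hmem v hv⟩ : Module.End.eigenspace (Matrix.mulVecLin M₂) (lam : ℂ)) ≠ 0 := by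
    intro h
    exact hne (congrFun (congrArg Subtype.val h) _)
  obtain ⟨c, hc⟩ := exists_smul_eq_of_finrank_eq_one hdim hv0
    ⟨_, hmem _ (flip_eigenvector B M₂ hM lam v hv)⟩
  have hc' : ∀ k, c * v k = conj (v (negIdx B k)) := fun k =>
    congrFun (congrArg Subtype.val hc) k
  have hmid : negIdx B ⟨B, by omega⟩ = ⟨B, by omega⟩ := by
    ext
    simp only [negIdx]
    omega
  have hc1 : c = 1 := by
    have h := hc' ⟨B, by omega⟩
    rw [hmid, Complex.conj_eq_iff_im.2 him] at h
    exact mul_right_cancel₀ hne (h.trans (one_mul _).symm)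
  rw [← hc', hc1, one_mul]
end

section
/- Let I = {(k,q) : −B ≤ k ≤ B, 0 ≤ q ≤ Q_k−1} for given radial bandwidths Q_k ≥ 1 with Q_{−k} = Q_k. Let x̂, x̂′ ∈ ℂ^I be non-vanishing and let ρ̂, ρ̂′ : {−2B,…,2B} → ℂ be non-vanishing with ρ̂[0] = ρ̂′[0] = 1/(2π) and conjugate symmetry ρ̂[−k] = conj(ρ̂[k]) and ρ̂′[−k] = conj(ρ̂′[k]). Suppose the two pairs produce the same first two moments: x̂[k,q]·ρ̂[k] = x̂′[k,q]·ρ̂′[k] for all (k,q) ∈ I, and x̂[k₁,q₁]·conj(x̂[k₂,q₂])·ρ̂[k₁−k₂] = x̂′[k₁,q₁]·conj(x̂′[k₂,q₂])·ρ̂′[k₁−k₂] for all (k₁,q₁), (k₂,q₂) ∈ I. Then there exists a complex number u with |u| = 1 such that ρ̂′[k] = ρ̂[k]·u^k for all k ∈ {−2B,…,2B} and x̂′[k,q] = x̂[k,q]·u^{−k} for all (k,q) ∈ I. -/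
/-!
Put `r k = ρ̂'[k] / ρ̂[k]`. Equality of the first moments gives `x̂[k,q] = x̂'[k,q] * r k`, and
substituting this into the second moments yields `r (k₁ - k₂) = r k₁ * conj (r k₂)` for
`|k₁|, |k₂| ≤ B`, while `r 0 = 1`. Such an `r` is a unitary character on `{-2B, …, 2B}`
(`eq_zpow_of_sub_eq_mul_conj`), so `u = r 1` is the required rotation.
-/

open Complex Real ComplexConjugate

/-- A function that behaves like a unitary character on differences of elements of `[-B, B]` is
`k ↦ r 1 ^ k` on `[-2B, 2B]`. Taking `k₁ = k₂` gives `|r k| = 1`, and `k₁ = 0` gives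
`r (-k) = conj (r k)`; induction then covers `[-B, B]`, and every element of `[-2B, 2B]` is a
difference of two elements of `[-B, B]`. -/
lemma eq_zpow_of_sub_eq_mul_conj (B : ℕ) (hB : 1 ≤ B) (r : ℤ → ℂ) (h0 : r 0 = 1)
    (h : ∀ k₁ k₂ : ℤ, |k₁| ≤ B → |k₂| ≤ B → r (k₁ - k₂) = r k₁ * conj (r k₂)) :
    ‖r 1‖ = 1 ∧ ∀ k : ℤ, |k| ≤ 2 * B → r k = r 1 ^ k := by
  have h1B : |(1 : ℤ)| ≤ B := by simpa using hB
  have hu : r 1 * conj (r 1) = 1 := by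
    rw [← h 1 1 h1B h1B, sub_self, h0]
  have hconj : conj (r 1) = (r 1)⁻¹ := eq_inv_of_mul_eq_one_right hu
  have hne : r 1 ≠ 0 := left_ne_zero_of_mul_eq_one hu
  have hneg : ∀ k : ℤ, |k| ≤ B → r (-k) = conj (r k) := fun k hk => by
    simpa [h0] using h 0 k (by simp) hk
  have hnat : ∀ n : ℕ, n ≤ B → r n = r 1 ^ n := by
    intro n
    induction n with
    | zero => intro _; simpa using h0
    | succ n ih =>
      intro hn
      have e := h n (-1) (by rw [Nat.abs_cast]; omega) (by simpa using hB)
      rw [hneg 1 h1B, Complex.conj_conj, ih (by omega), sub_neg_eq_add] at e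
      rw [pow_succ, ← e]
      push_cast
      rfl
  have hint : ∀ k : ℤ, |k| ≤ B → r k = r 1 ^ k := by
    intro k hk
    obtain ⟨n, rfl | rfl⟩ := k.eq_nat_or_neg
    · rw [hnat n (by rw [Nat.abs_cast] at hk; omega), zpow_natCast]
    · rw [abs_neg] at hk
      rw [hneg n hk, hnat n (by rw [Nat.abs_cast] at hk; omega), map_pow, hconj, zpow_neg,
        zpow_natCast, inv_pow]
  refine ⟨?_, fun k hk => ?_⟩
  · rw [Complex.mul_conj'] at hu
    have : ‖r 1‖ ^ 2 = 1 := by exact_mod_cast hu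
    exact (pow_eq_one_iff_of_nonneg (norm_nonneg _) two_ne_zero).1 this
  · obtain ⟨a, b, ha, hb, rfl⟩ : ∃ a b : ℤ, |a| ≤ B ∧ |b| ≤ B ∧ k = a - b := by
      rw [abs_le] at hk
      rcases le_total 0 k with hk0 | hk0
      · rcases le_total k B with hkB | hkB
        · exact ⟨k, 0, abs_le.2 ⟨by omega, by omega⟩, by simp, by ring⟩
        · exact ⟨B, B - k, by simp, abs_le.2 ⟨by omega, by omega⟩, by ring⟩
      · rcases le_total (-B : ℤ) k with hkB | hkB
        · exact ⟨k, 0, abs_le.2 ⟨by omega, by omega⟩, by simp, by ring⟩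
        · exact ⟨-B, -B - k, by simp, abs_le.2 ⟨by omega, by omega⟩, by ring⟩
    rw [h a b ha hb, hint a ha, hint b hb, map_zpow₀, hconj, inv_zpow, zpow_sub₀ hne,
      div_eq_mul_inv]

/-- uniqueness, up to a global rotation, of a non-vanishing 2-D signal
(indexed by `I = {(k,q) : -B ≤ k ≤ B, 0 ≤ q ≤ Q_k - 1}`) and non-vanishing distribution
from the first two moments. -/
theorem stmt_9 (B : ℕ) (hB : 1 ≤ B)
    (Q : ℤ → ℕ) (hQ1 : ∀ k, 1 ≤ Q k) (hQsym : ∀ k : ℤ, Q (-k) = Q k)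
    (xhat xhat' : ℤ → ℕ → ℂ) (rhohat rhohat' : ℤ → ℂ)
    (hxnv : ∀ k ∈ Finset.Icc (-(B : ℤ)) (B : ℤ), ∀ q ∈ Finset.range (Q k), xhat k q ≠ 0)
    (hxnv' : ∀ k ∈ Finset.Icc (-(B : ℤ)) (B : ℤ), ∀ q ∈ Finset.range (Q k), xhat' k q ≠ 0)
    (hρnv : ∀ k ∈ Finset.Icc (-(2 * B : ℤ)) (2 * B : ℤ), rhohat k ≠ 0)
    (hρnv' : ∀ k ∈ Finset.Icc (-(2 * B : ℤ)) (2 * B : ℤ), rhohat' k ≠ 0)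
    (hρ0 : rhohat 0 = 1 / (2 * π))
    (hρ0' : rhohat' 0 = 1 / (2 * π))
    (hρsym : ∀ k ∈ Finset.Icc (-(2 * B : ℤ)) (2 * B : ℤ), rhohat (-k) = conj (rhohat k))
    (hρsym' : ∀ k ∈ Finset.Icc (-(2 * B : ℤ)) (2 * B : ℤ), rhohat' (-k) = conj (rhohat' k))
    (hM1 : ∀ k ∈ Finset.Icc (-(B : ℤ)) (B : ℤ), ∀ q ∈ Finset.range (Q k),
      xhat k q * rhohat k = xhat' k q * rhohat' k)
    (hM2 : ∀ k₁ ∈ Finset.Icc (-(B : ℤ)) (B : ℤ), ∀ q₁ ∈ Finset.range (Q k₁),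
      ∀ k₂ ∈ Finset.Icc (-(B : ℤ)) (B : ℤ), ∀ q₂ ∈ Finset.range (Q k₂),
      xhat k₁ q₁ * conj (xhat k₂ q₂) * rhohat (k₁ - k₂) =
        xhat' k₁ q₁ * conj (xhat' k₂ q₂) * rhohat' (k₁ - k₂)) :
    ∃ u : ℂ, ‖u‖ = 1 ∧
      (∀ k ∈ Finset.Icc (-(2 * B : ℤ)) (2 * B : ℤ), rhohat' k = rhohat k * u ^ k) ∧
      (∀ k ∈ Finset.Icc (-(B : ℤ)) (B : ℤ), ∀ q ∈ Finset.range (Q k),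
        xhat' k q = xhat k q * u ^ (-k)) := by
  have hQ0 : ∀ k, 0 ∈ Finset.range (Q k) := fun k => Finset.mem_range.2 (hQ1 k)
  have hx : ∀ k ∈ Finset.Icc (-(B : ℤ)) (B : ℤ), ∀ q ∈ Finset.range (Q k),
      xhat k q = xhat' k q * (rhohat' k / rhohat k) := by
    intro k hk q hq
    have hne : rhohat k ≠ 0 := hρnv k (by rw [Finset.mem_Icc] at hk ⊢; omega)
    rw [← mul_div_assoc, ← hM1 k hk q hq, mul_div_cancel_right₀ _ hne]
  obtain ⟨hu, hr⟩ := eq_zpow_of_sub_eq_mul_conj B hB (fun k => rhohat' k / rhohat k)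
    (by
      have h0 : rhohat 0 ≠ 0 := hρnv 0 (by rw [Finset.mem_Icc]; omega)
      have h00 : rhohat' 0 = rhohat 0 := hρ0'.trans hρ0.symm
      simp only [h00, div_self h0])
    (by
      intro k₁ k₂ h₁ h₂
      have m₁ : k₁ ∈ Finset.Icc (-(B : ℤ)) (B : ℤ) := Finset.mem_Icc.2 (abs_le.1 h₁)
      have m₂ : k₂ ∈ Finset.Icc (-(B : ℤ)) (B : ℤ) := Finset.mem_Icc.2 (abs_le.1 h₂)
      have hne : rhohat (k₁ - k₂) ≠ 0 :=
        hρnv _ (by rw [Finset.mem_Icc] at m₁ m₂ ⊢; omega)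
      have e := hM2 k₁ m₁ 0 (hQ0 _) k₂ m₂ 0 (hQ0 _)
      rw [hx k₁ m₁ 0 (hQ0 _), hx k₂ m₂ 0 (hQ0 _), map_mul] at e
      have n₁ := hxnv' k₁ m₁ 0 (hQ0 _)
      have n₂ : conj (xhat' k₂ 0) ≠ 0 := (map_ne_zero _).2 (hxnv' k₂ m₂ 0 (hQ0 _))
      refine (div_eq_iff hne).2 (mul_left_cancel₀ (mul_ne_zero n₁ n₂) ?_)
      rw [← e]
      ring)
  refine ⟨rhohat' 1 / rhohat 1, hu, fun k hk => ?_, fun k hk q hq => ?_⟩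
  · have e : rhohat' k / rhohat k = _ :=
      hr k (abs_le.2 (Finset.mem_Icc.1 hk))
    rw [← e, mul_div_cancel₀ _ (hρnv k hk)]
  · have hk2 : k ∈ Finset.Icc (-(2 * B : ℤ)) (2 * B : ℤ) := by
      rw [Finset.mem_Icc] at hk ⊢; omega
    have e : rhohat' k / rhohat k = _ :=
      hr k (abs_le.2 (Finset.mem_Icc.1 hk2))
    rw [zpow_neg, ← e, hx k hk q hq,
      mul_inv_cancel_right₀ (div_ne_zero (hρnv' k hk2) (hρnv k hk2))]
end

section
/- Let v ∈ ℂⁿ and let V ∈ ℂ^{Q×n} have all Q rows equal to v. Then BC(V) is unitarily diagonalizable and its characteristic polynomial equals λ^{(Q−1)n} · Π_{b=0}^{n−1} ( λ − Q·v̂[b] ), where v̂[b] = Σ_{k=0}^{n−1} v[k]·e^{−ι2πkb/n}. In particular, the nonzero eigenvalues of BC(V) are among the n numbers Q·v̂[b], b = 0,…,n−1, and 0 is an eigenvalue of multiplicity at least (Q−1)n whenever Q ≥ 2. -/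
/-!
When all rows of `V` equal `v`, the matrix `BC(V)` is the Kronecker product of the circulant
matrix of `v` with the `Q × Q` all-ones matrix, which is itself the circulant matrix of the
constant sequence `1`. Every circulant matrix is diagonalized by the unitary Fourier matrix,
its eigenvalues being the Fourier coefficients of its generator (`circulant_eq`); for the
all-ones matrix these are `Q` (once) and `0` (with multiplicity `Q - 1`), see
`sum_inv_root_pow`. Hence the Kronecker product of the two Fourier matrices is a unitary matrix
diagonalizing `BC(V)`, with eigenvalues `v̂[b] * Q` and `0` (`BCmat_eq`). The characteristic
polynomial is read off the diagonal form, and the claims on eigenvalues off the characteristic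
polynomial.
-/

open Complex Real ComplexConjugate

/-- The block-circulant matrix `BC(V)[(k₁,q₁),(k₂,q₂)] = V[(q₁-q₂) mod Q, (k₁-k₂) mod n]`. -/
noncomputable def BCmat (B Q : ℕ) (V : Matrix (Fin Q) (Fin (2 * B + 1)) ℂ) :
    Matrix (Fin (2 * B + 1) × Fin Q) (Fin (2 * B + 1) × Fin Q) ℂ :=
  Matrix.of fun p₁ p₂ => V (p₁.2 - p₂.2) (p₁.1 - p₂.1)

/-- The DFT `v̂[b] = Σ_{k=0}^{n-1} v[k]·e^{-ι2πkb/n}` of `v ∈ ℂⁿ`, `n = 2B+1`. -/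
noncomputable def vdft (B : ℕ) (v : Fin (2 * B + 1) → ℂ) (b : ℕ) : ℂ :=
  ∑ k : Fin (2 * B + 1),
    v k * Complex.exp (-(((2 * π * ((k : ℕ) : ℝ) * (b : ℝ)) / ((2 * B + 1 : ℕ) : ℝ) : ℝ) : ℂ) *
      Complex.I)

/-- The unitary discrete Fourier matrix, with entries `ζ ^ (k * b) / √n` for
`ζ = exp (2πi / n)`. Its columns are the eigenvectors of every circulant matrix. -/
noncomputable def fourierMat (n : ℕ) : Matrix (Fin n) (Fin n) ℂ :=
  Matrix.of fun k b => (Complex.exp (2 * π * I / n)) ^ ((k : ℕ) * (b : ℕ)) / (√(n : ℝ) : ℂ)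

lemma star_exp_root (n : ℕ) :
    star (Complex.exp (2 * π * I / n)) = (Complex.exp (2 * π * I / n))⁻¹ := by
  rw [← Complex.exp_neg, Complex.star_def, ← Complex.exp_conj]
  congr 1
  have h2 : conj (2 : ℂ) = 2 := map_ofNat _ 2
  simp [neg_div, h2]

lemma fourierMat_mem (n : ℕ) [NeZero n] : fourierMat n ∈ Matrix.unitaryGroup (Fin n) ℂ := by
  rw [Matrix.mem_unitaryGroup_iff']
  ext b c
  have hζ := Complex.isPrimitiveRoot_exp n (NeZero.ne n)
  have hst := star_exp_root n
  set ζ := Complex.exp (2 * π * I / n) with hζd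
  have h0 : ζ ≠ 0 := Complex.exp_ne_zero _
  have hn : (n : ℂ) ≠ 0 := by exact_mod_cast NeZero.ne n
  have hs : (√(n : ℝ) : ℂ) * (√(n : ℝ) : ℂ) = n := by
    rw [← Complex.ofReal_mul, Real.mul_self_sqrt (Nat.cast_nonneg n)]; simp
  have hterm : ∀ k : Fin n, star (fourierMat n k b) * fourierMat n k c =
      (ζ ^ (c : ℕ) / ζ ^ (b : ℕ)) ^ (k : ℕ) / n := by
    intro k
    simp only [fourierMat, Matrix.of_apply, ← hζd]
    rw [star_div₀, star_pow, hst, Complex.star_def, Complex.conj_ofReal, div_mul_div_comm, hs]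
    congr 1
    rw [inv_pow, div_pow, ← pow_mul, ← pow_mul, mul_comm (c : ℕ), mul_comm (b : ℕ)]
    field_simp
  rw [Matrix.mul_apply]
  simp only [Matrix.star_apply, hterm]
  rw [Fin.sum_univ_eq_sum_range (fun k => (ζ ^ (c : ℕ) / ζ ^ (b : ℕ)) ^ k / (n : ℂ)),
    ← Finset.sum_div]
  by_cases hbc : b = c
  · subst hbc
    simp [h0, hn]
  · have hx : ζ ^ (c : ℕ) / ζ ^ (b : ℕ) ≠ 1 := by
      intro h
      rw [div_eq_one_iff_eq (pow_ne_zero _ h0)] at h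
      exact hbc (Fin.ext (hζ.pow_inj c.2 b.2 h).symm)
    rw [geom_sum_eq hx, Matrix.one_apply_ne hbc, div_pow, ← pow_mul, ← pow_mul,
      mul_comm _ n, mul_comm _ n, pow_mul, pow_mul, hζ.pow_eq_one]
    simp

/-- The `b`-th Fourier column is an eigenvector of `circulant w`, with eigenvalue the `b`-th
discrete Fourier coefficient of `w`. -/
lemma circulant_mul_fourierMat (n : ℕ) [NeZero n] (w : Fin n → ℂ) :
    Matrix.circulant w * fourierMat n = fourierMat n * Matrix.diagonal fun b : Fin n =>
      ∑ k : Fin n, w k * (Complex.exp (2 * π * I / n))⁻¹ ^ ((k : ℕ) * (b : ℕ)) := by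
  ext k b
  have hζ := Complex.isPrimitiveRoot_exp n (NeZero.ne n)
  -- Substitute `j ↦ k - j` in the convolution sum, so that both sides agree term by term.
  rw [Matrix.mul_diagonal, Matrix.mul_apply, Finset.mul_sum,
    ← Equiv.sum_comp (Equiv.subLeft k)]
  refine Finset.sum_congr rfl fun j _ => ?_
  simp only [fourierMat, Matrix.of_apply, Matrix.circulant_apply, Equiv.subLeft_apply,
    sub_sub_cancel]
  set ζ := Complex.exp (2 * π * I / n) with hζd
  have h0 : ζ ≠ 0 := Complex.exp_ne_zero _
  have hadd : ζ ^ ((k - j : Fin n) : ℕ) * ζ ^ (j : ℕ) = ζ ^ (k : ℕ) := by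
    conv_rhs => rw [← sub_add_cancel k j, Fin.val_add]
    rw [← pow_add, ← pow_mod_orderOf ζ (_ + _), ← hζ.eq_orderOf]
  rw [pow_mul, pow_mul, pow_mul, ← hadd, inv_pow, inv_pow, mul_pow]
  field_simp

lemma circulant_eq (n : ℕ) [NeZero n] (w : Fin n → ℂ) :
    Matrix.circulant w = fourierMat n * (Matrix.diagonal fun b : Fin n =>
      ∑ k : Fin n, w k * (Complex.exp (2 * π * I / n))⁻¹ ^ ((k : ℕ) * (b : ℕ))) *
      star (fourierMat n) := by
  rw [← circulant_mul_fourierMat, mul_assoc,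
    Matrix.mem_unitaryGroup_iff.mp (fourierMat_mem n), mul_one]

/-- The eigenvalues of the all-ones matrix, written as the Fourier coefficients of the
constant sequence `1`. -/
lemma sum_inv_root_pow (n : ℕ) [NeZero n] (b : Fin n) :
    ∑ k : Fin n, (1 : ℂ) * (Complex.exp (2 * π * I / n))⁻¹ ^ ((k : ℕ) * (b : ℕ)) =
      if b = 0 then (n : ℂ) else 0 := by
  have hζ := (Complex.isPrimitiveRoot_exp n (NeZero.ne n)).inv
  set ζ := (Complex.exp (2 * π * I / n))⁻¹
  split_ifs with hb
  · simp [hb]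
  · have hx : ζ ^ (b : ℕ) ≠ 1 := fun h => hb <| Fin.ext <|
      hζ.pow_inj b.2 (0 : Fin n).2 (by simpa using h)
    simp only [one_mul, mul_comm _ (b : ℕ), pow_mul]
    rw [Fin.sum_univ_eq_sum_range (fun k => (ζ ^ (b : ℕ)) ^ k), geom_sum_eq hx, ← pow_mul,
      mul_comm, pow_mul, hζ.pow_eq_one]
    simp

lemma vdft_eq (B : ℕ) (v : Fin (2 * B + 1) → ℂ) (b : ℕ) :
    vdft B v b = ∑ k : Fin (2 * B + 1),
      v k * (Complex.exp (2 * π * I / (2 * B + 1 : ℕ)))⁻¹ ^ ((k : ℕ) * b) := by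
  refine Finset.sum_congr rfl fun k _ => ?_
  rw [← Complex.exp_neg, ← Complex.exp_nat_mul]
  congr 2
  push_cast
  ring

lemma BCmat_eq (B Q : ℕ) [NeZero Q] (v : Fin (2 * B + 1) → ℂ)
    (V : Matrix (Fin Q) (Fin (2 * B + 1)) ℂ) (hV : ∀ q j, V q j = v j) :
    BCmat B Q V = Matrix.kronecker (fourierMat (2 * B + 1)) (fourierMat Q) *
      Matrix.diagonal (fun p : Fin (2 * B + 1) × Fin Q =>
        vdft B v (p.1 : ℕ) * if p.2 = 0 then (Q : ℂ) else 0) *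
      star (Matrix.kronecker (fourierMat (2 * B + 1)) (fourierMat Q)) := by
  have h1 : BCmat B Q V =
      Matrix.kronecker (Matrix.circulant v) (Matrix.circulant fun _ : Fin Q => (1 : ℂ)) := by
    ext p₁ p₂
    simp [BCmat, hV, Matrix.circulant_apply]
  have h2 := circulant_eq (2 * B + 1) v
  have h3 := circulant_eq Q (fun _ => (1 : ℂ))
  simp only [← vdft_eq] at h2
  simp only [sum_inv_root_pow] at h3
  rw [h1, h2, h3]
  simp only [Matrix.kronecker, Matrix.star_eq_conjTranspose]
  erw [Matrix.mul_kronecker_mul, Matrix.mul_kronecker_mul, Matrix.diagonal_kronecker_diagonal,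
    Matrix.conjTranspose_kronecker]

lemma BCmat_charpoly (B Q : ℕ) [NeZero Q] (v : Fin (2 * B + 1) → ℂ)
    (V : Matrix (Fin Q) (Fin (2 * B + 1)) ℂ) (hV : ∀ q j, V q j = v j) :
    (BCmat B Q V).charpoly =
      Polynomial.X ^ ((Q - 1) * (2 * B + 1)) *
        ∏ b ∈ Finset.range (2 * B + 1),
          (Polynomial.X - Polynomial.C ((Q : ℂ) * vdft B v b)) := by
  have hU : Matrix.kronecker (fourierMat (2 * B + 1)) (fourierMat Q) ∈
      Matrix.unitaryGroup _ ℂ :=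
    Matrix.kronecker_mem_unitary (fourierMat_mem _) (fourierMat_mem _)
  rw [BCmat_eq B Q v V hV, Matrix.charpoly_mul_comm, ← mul_assoc,
    Matrix.mem_unitaryGroup_iff'.mp hU, one_mul, Matrix.charpoly_diagonal, Fintype.prod_prod_type,
    ← Fin.prod_univ_eq_prod_range
      (fun b => Polynomial.X - Polynomial.C ((Q : ℂ) * vdft B v b)), pow_mul]
  -- For fixed `b`, the index `q = 0` gives the factor `X - Q v̂[b]`, the other `Q - 1` give `X`.
  have hin : ∀ b : Fin (2 * B + 1),
      ∏ q : Fin Q, (Polynomial.X - Polynomial.C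
        (vdft B v (b : ℕ) * if q = 0 then (Q : ℂ) else 0)) =
      Polynomial.X ^ (Q - 1) * (Polynomial.X - Polynomial.C ((Q : ℂ) * vdft B v b)) := by
    intro b
    rw [← Finset.prod_erase_mul _ _ (Finset.mem_univ (0 : Fin Q))]
    congr 1
    · rw [Finset.prod_congr rfl (g := fun _ => Polynomial.X)]
      · simp
      · intro q hq
        simp [Finset.ne_of_mem_erase hq]
    · simp [mul_comm]
  simp only [hin, Finset.prod_mul_distrib, Finset.prod_const, Finset.card_univ, Fintype.card_fin]

/-- if all `Q` rows of `V` equal `v`, then `BC(V)` is unitarily diagonalizable,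
its characteristic polynomial is `λ^{(Q-1)n}·Π_b (λ - Q·v̂[b])`; in particular every nonzero
eigenvalue is among the `Q·v̂[b]`, and `0` is an eigenvalue of multiplicity at least `(Q-1)n`
whenever `Q ≥ 2`. -/
theorem stmt_11 (B Q : ℕ) (hB : 1 ≤ B) (hQ : 1 ≤ Q)
    (v : Fin (2 * B + 1) → ℂ)
    (V : Matrix (Fin Q) (Fin (2 * B + 1)) ℂ)
    (hV : ∀ (q : Fin Q) (j : Fin (2 * B + 1)), V q j = v j) :
    (∃ U : Matrix (Fin (2 * B + 1) × Fin Q) (Fin (2 * B + 1) × Fin Q) ℂ,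
      U ∈ Matrix.unitaryGroup (Fin (2 * B + 1) × Fin Q) ℂ ∧
      ∃ d : Fin (2 * B + 1) × Fin Q → ℂ,
        BCmat B Q V = U * Matrix.diagonal d * star U) ∧
    (BCmat B Q V).charpoly =
      Polynomial.X ^ ((Q - 1) * (2 * B + 1)) *
        ∏ b ∈ Finset.range (2 * B + 1),
          (Polynomial.X - Polynomial.C ((Q : ℂ) * vdft B v b)) ∧
    (∀ μ : ℂ, μ ≠ 0 → Module.End.HasEigenvalue (Matrix.mulVecLin (BCmat B Q V)) μ →
      ∃ b < 2 * B + 1, μ = (Q : ℂ) * vdft B v b) ∧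
    (2 ≤ Q → Module.End.HasEigenvalue (Matrix.mulVecLin (BCmat B Q V)) 0 ∧
      (Q - 1) * (2 * B + 1) ≤ Polynomial.rootMultiplicity 0 (BCmat B Q V).charpoly) := by
  have : NeZero Q := ⟨by omega⟩
  have hchar := BCmat_charpoly B Q v V hV
  refine ⟨⟨_, Matrix.kronecker_mem_unitary (fourierMat_mem _) (fourierMat_mem _), _,
    BCmat_eq B Q v V hV⟩, hchar, ?_, ?_⟩
  · intro μ hμ h
    rw [Module.End.hasEigenvalue_iff_isRoot_charpoly, Matrix.charpoly_mulVecLin, hchar,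
      Polynomial.IsRoot.def, Polynomial.eval_mul, Polynomial.eval_prod] at h
    simp only [Polynomial.eval_pow, Polynomial.eval_X, Polynomial.eval_sub, Polynomial.eval_C,
      mul_eq_zero, pow_ne_zero _ hμ, false_or, Finset.prod_eq_zero_iff, Finset.mem_range] at h
    obtain ⟨b, hb, h⟩ := h
    exact ⟨b, hb, sub_eq_zero.mp h⟩
  · intro hQ2
    have hmult : (Q - 1) * (2 * B + 1) ≤
        Polynomial.rootMultiplicity 0 (BCmat B Q V).charpoly := by
      rw [Polynomial.le_rootMultiplicity_iff (Matrix.charpoly_monic _).ne_zero, hchar]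
      simp
    refine ⟨?_, hmult⟩
    have hpos : 0 < (Q - 1) * (2 * B + 1) := Nat.mul_pos (by omega) (by omega)
    rw [Module.End.hasEigenvalue_iff_isRoot_charpoly, Matrix.charpoly_mulVecLin]
    exact (Polynomial.rootMultiplicity_pos (Matrix.charpoly_monic _).ne_zero).mp
      (hpos.trans_le hmult)
end

section
/- Let v ∈ ℂⁿ, let V ∈ ℂ^{Q×n} have all Q rows equal to v, and let x̃ ∈ ℂ^I with |x̃[k,q]| = 1 for all (k,q) ∈ I. Set M = 2π·D_x̃·BC(V)·D_x̃*. If λ ≠ 0 is an eigenvalue of M whose eigenspace is one-dimensional and u ∈ ℂ^I is a unit-norm eigenvector of M for λ, then there exist l ∈ {0,…,n−1} and α ∈ ℂ with |α| = 1 such that u[k,q] = (α/√(nQ))·e^{−ι2πlk/n}·x̃[k,q] for all (k,q) ∈ I. -/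
/-!
Write `u = D_x̃ y`. Since `|x̃| = 1` and all rows of `V` equal `v`, the eigenvalue equation becomes
`2π ∑ v(k₁ - k₂) y(k₂, q₂) = λ y(k₁, q₁)` (`eigen_iff`). The left-hand side does not depend on `q₁`,
so neither does `y`, because `λ ≠ 0`. The equation is also invariant under the cyclic shift
`k ↦ k + 1`, so the shift of `y` again yields an eigenvector; as the eigenspace is a line,
`y(k + 1) = c y(k)` for some scalar `c`. Going once around the cycle gives `c ^ n = 1`
(`exists_root_of_shift`), hence `c = e^{-ι2πl/n}`, and the unit norm of `u` fixes `|y|`.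
-/

open Complex Real ComplexConjugate

/-- The eigenvalue equation for `D_x̃ y`, after cancelling the unimodular diagonal factors. -/
lemma eigen_iff {B Q : ℕ} (v : Fin (2 * B + 1) → ℂ)
    (V : Matrix (Fin Q) (Fin (2 * B + 1)) ℂ)
    (hV : ∀ (q : Fin Q) (j : Fin (2 * B + 1)), V q j = v j)
    (xt : Fin (2 * B + 1) × Fin Q → ℂ) (hxt : ∀ p, ‖xt p‖ = 1)
    (lam : ℂ) (y : Fin (2 * B + 1) × Fin Q → ℂ) :
    (((2 * π : ℝ) : ℂ) • (Matrix.diagonal xt * BCmat B Q V *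
      (Matrix.diagonal xt).conjTranspose)).mulVec (fun p => xt p * y p) =
        lam • (fun p => xt p * y p) ↔
      ∀ p, ((2 * π : ℝ) : ℂ) * ∑ p₂, v (p.1 - p₂.1) * y p₂ = lam * y p := by
  have hconj : ∀ p, conj (xt p) * xt p = 1 := fun p => by
    rw [Complex.conj_mul', hxt]; simp
  have hne : ∀ p, xt p ≠ 0 := fun p h => by simpa [h] using hxt p
  rw [funext_iff]
  refine forall_congr' fun p => ?_
  have h : (((2 * π : ℝ) : ℂ) • (Matrix.diagonal xt * BCmat B Q V *
      (Matrix.diagonal xt).conjTranspose)).mulVec (fun p => xt p * y p) p =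
      xt p * (((2 * π : ℝ) : ℂ) * ∑ p₂, v (p.1 - p₂.1) * y p₂) := by
    rw [Matrix.smul_mulVec, Pi.smul_apply, smul_eq_mul, mul_left_comm]
    congr 1
    rw [Matrix.mulVec, dotProduct, Finset.mul_sum]
    refine Finset.sum_congr rfl fun p₂ _ => ?_
    rw [Matrix.diagonal_conjTranspose, Matrix.mul_diagonal, Matrix.diagonal_mul]
    simp only [BCmat, Matrix.of_apply, hV, Pi.star_apply, RCLike.star_def]
    linear_combination xt p * v (p.1 - p₂.1) * y p₂ * hconj p₂
  rw [h, Pi.smul_apply, smul_eq_mul, mul_left_comm lam]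
  exact mul_right_inj' (hne p)

/-- A nonzero function on the cycle that is multiplied by `c` under the shift is geometric, and
its ratio `c` is an `n`-th root of unity. -/
lemma exists_root_of_shift {B : ℕ} (z : Fin (2 * B + 1) → ℂ) (hz : z ≠ 0) (c : ℂ)
    (hc : ∀ i, z (i + 1) = c * z i) :
    c ^ (2 * B + 1) = 1 ∧ ∀ i : Fin (2 * B + 1), z i = c ^ (i : ℕ) * z 0 := by
  have hg : ∀ m : ℕ, z (Fin.ofNat (2 * B + 1) m) = c ^ m * z 0 := by
    intro m
    induction m with
    | zero => rw [pow_zero, one_mul]; rfl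
    | succ m ih =>
      have : Fin.ofNat (2 * B + 1) (m + 1) = Fin.ofNat (2 * B + 1) m + 1 := by
        apply Fin.ext
        simp [Fin.val_add]
      rw [this, hc, ih, pow_succ]; ring
  have hgeom : ∀ i : Fin (2 * B + 1), z i = c ^ (i : ℕ) * z 0 := fun i => by
    rw [← hg, Fin.ofNat_val_eq_self]
  have h0 : z 0 ≠ 0 := fun h => hz (funext fun i => by rw [hgeom i, h, mul_zero]; rfl)
  refine ⟨?_, hgeom⟩
  have h := hg (2 * B + 1)
  have hcyc : Fin.ofNat (2 * B + 1) (2 * B + 1) = 0 := by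
    apply Fin.ext
    simp
  rw [hcyc] at h
  exact mul_right_cancel₀ h0 (by rw [← h, one_mul])

lemma exp_phase {B l : ℕ} (c : ℂ)
    (hl : Complex.exp (2 * π * Complex.I / ((2 * B + 1 : ℕ) : ℂ)) ^ l = c⁻¹)
    (i : Fin (2 * B + 1)) :
    c ^ B * Complex.exp (-((phase B l i : ℝ) : ℂ) * Complex.I) = c ^ (i : ℕ) := by
  have hc : c = Complex.exp (-(l * (2 * π * Complex.I / ((2 * B + 1 : ℕ) : ℂ)))) := by
    rw [Complex.exp_neg, Complex.exp_nat_mul, hl, inv_inv]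
  rw [hc, ← Complex.exp_nat_mul, ← Complex.exp_nat_mul, ← Complex.exp_add]
  congr 1
  simp only [phase]
  push_cast
  ring

/-- any unit-norm eigenvector of `M = 2π D_x̃ BC(V) D_x̃*` for a nonzero
eigenvalue with a one-dimensional eigenspace equals `(α/√(nQ))·e^{-ι2πlk/n}·x̃[k,q]`
for some `l ∈ {0,…,n-1}` and unimodular `α`. -/
theorem stmt_12 (B Q : ℕ) (hB : 1 ≤ B) (hQ : 1 ≤ Q)
    (v : Fin (2 * B + 1) → ℂ)
    (V : Matrix (Fin Q) (Fin (2 * B + 1)) ℂ)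
    (hV : ∀ (q : Fin Q) (j : Fin (2 * B + 1)), V q j = v j)
    (xt : Fin (2 * B + 1) × Fin Q → ℂ) (hxt : ∀ p, ‖xt p‖ = 1)
    (M : Matrix (Fin (2 * B + 1) × Fin Q) (Fin (2 * B + 1) × Fin Q) ℂ)
    (hM : M = ((2 * π : ℝ) : ℂ) •
      (Matrix.diagonal xt * BCmat B Q V * (Matrix.diagonal xt).conjTranspose))
    (lam : ℂ) (hlam : lam ≠ 0)
    (hdim : Module.finrank ℂ (Module.End.eigenspace (Matrix.mulVecLin M) lam) = 1)
    (u : Fin (2 * B + 1) × Fin Q → ℂ)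
    (hu : M.mulVec u = lam • u)
    (hunorm : ∑ p, ‖u p‖ ^ 2 = 1) :
    ∃ l < 2 * B + 1, ∃ α : ℂ, ‖α‖ = 1 ∧
      ∀ p : Fin (2 * B + 1) × Fin Q,
        u p = α / ((Real.sqrt (((2 * B + 1) * Q : ℕ) : ℝ) : ℝ) : ℂ) *
          Complex.exp (-((phase B l p.1 : ℝ) : ℂ) * Complex.I) * xt p := by
  subst hM
  have hne : ∀ p, xt p ≠ 0 := fun p h => by simpa [h] using hxt p
  obtain ⟨y, rfl⟩ : ∃ y : Fin (2 * B + 1) × Fin Q → ℂ, u = fun p => xt p * y p :=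
    ⟨fun p => u p / xt p, funext fun p => (mul_div_cancel₀ _ (hne p)).symm⟩
  have hy := (eigen_iff v V hV xt hxt lam y).1 hu
  -- The left-hand side of `hy` only sees the first index.
  have hconst : ∀ i q q', y (i, q) = y (i, q') := fun i q q' =>
    mul_left_cancel₀ hlam ((hy (i, q)).symm.trans (hy (i, q')))
  have hshift : ∀ p : Fin (2 * B + 1) × Fin Q, ((2 * π : ℝ) : ℂ) *
      ∑ p₂ : Fin (2 * B + 1) × Fin Q, v (p.1 - p₂.1) * y (p₂.1 + 1, p₂.2) = lam * y (p.1 + 1, p.2) := by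
    intro p
    rw [← hy (p.1 + 1, p.2)]
    congr 1
    refine Fintype.sum_equiv ((Equiv.addRight (1 : Fin (2 * B + 1))).prodCongr (Equiv.refl _))
      _ _ fun p₂ => ?_
    simp [Prod.map]
  have hu' := (eigen_iff v V hV xt hxt lam (fun p => y (p.1 + 1, p.2))).2 hshift
  have hu0 : (fun p => xt p * y p) ≠ 0 := by
    intro h
    have h' : ∀ p, xt p * y p = 0 := fun p => congrFun h p
    simp [h'] at hunorm
  obtain ⟨c, hc⟩ : ∃ c : ℂ, ∀ p : Fin (2 * B + 1) × Fin Q, y (p.1 + 1, p.2) = c * y p := by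
    obtain ⟨c, hc⟩ := (finrank_eq_one_iff_of_nonzero'
      (⟨_, Module.End.mem_eigenspace_iff.2 hu⟩ : Module.End.eigenspace _ lam)
      (fun h => hu0 (congrArg Subtype.val h))).1 hdim
      ⟨_, Module.End.mem_eigenspace_iff.2 hu'⟩
    refine ⟨c, fun p => mul_left_cancel₀ (hne p) ?_⟩
    have h := congrFun (congrArg Subtype.val hc) p
    have h' : c * (xt p * y p) = xt p * y (p.1 + 1, p.2) := h
    rw [← h']; ring
  let q₀ : Fin Q := ⟨0, hQ⟩
  have hz : (fun i => y (i, q₀)) ≠ 0 := fun h => hu0 (funext fun p => by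
    have : y p = 0 := (hconst p.1 p.2 q₀).trans (congrFun h p.1)
    simp [this])
  obtain ⟨hroot, hgeom⟩ := exists_root_of_shift (fun i => y (i, q₀)) hz c fun i => hc (i, q₀)
  have hyp : ∀ p, y p = c ^ (p.1 : ℕ) * y (0, q₀) := fun p =>
    (hconst p.1 p.2 q₀).trans (hgeom p.1)
  have hcnorm : ‖c‖ = 1 := Complex.norm_eq_one_of_pow_eq_one hroot (by omega)
  obtain ⟨l, hl, hlc⟩ := (Complex.isPrimitiveRoot_exp (2 * B + 1) (by omega)).eq_pow_of_pow_eq_one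
    (show c⁻¹ ^ (2 * B + 1) = 1 by rw [inv_pow, hroot, inv_one])
  have hN : (0 : ℝ) < (((2 * B + 1) * Q : ℕ) : ℝ) := by
    exact_mod_cast Nat.mul_pos (by omega) hQ
  have hnorm : (((2 * B + 1) * Q : ℕ) : ℝ) * ‖y (0, q₀)‖ ^ 2 = 1 := by
    rw [← hunorm, Finset.sum_congr rfl fun p _ => show ‖xt p * y p‖ ^ 2 = ‖y (0, q₀)‖ ^ 2 by
      rw [norm_mul, hxt, hyp p, norm_mul, norm_pow, hcnorm, one_pow, one_mul, one_mul]]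
    simp
  have hsqrt : ((Real.sqrt (((2 * B + 1) * Q : ℕ) : ℝ) : ℝ) : ℂ) ≠ 0 :=
    Complex.ofReal_ne_zero.2 (Real.sqrt_ne_zero hN.le |>.2 (ne_of_gt hN))
  -- The factor `c ^ B` accounts for the index `0` of `Fin n` standing for `k = -B`.
  refine ⟨l, hl, ((Real.sqrt (((2 * B + 1) * Q : ℕ) : ℝ) : ℝ) : ℂ) * (c ^ B * y (0, q₀)),
    ?_, fun p => ?_⟩
  · rw [norm_mul, norm_mul, norm_pow, hcnorm, one_pow, one_mul, Complex.norm_real,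
      Real.norm_of_nonneg (Real.sqrt_nonneg _)]
    refine (sq_eq_sq₀ (by positivity) zero_le_one).1 ?_
    rw [mul_pow, Real.sq_sqrt hN.le, hnorm, one_pow]
  · rw [mul_div_cancel_left₀ _ hsqrt]
    show xt p * y p = _
    rw [hyp p, ← exp_phase c hlc p.1]
    ring
end

section
/- Let x̃ ∈ ℂ^I satisfy x̃[−k,q] = conj(x̃[k,q]) and let ρ̂ : {−2B,…,2B} → ℂ satisfy ρ̂[−k] = conj(ρ̂[k]); set M₂ = 2π·D_x̃·𝒯_ρ·D_x̃*. (i) If v ∈ ℂ^I satisfies M₂v = λv with λ ∈ ℝ, then the vector v′ defined by v′[k,q] = conj(v[−k,q]) also satisfies M₂v′ = λv′. (ii) If in addition the eigenspace of λ is one-dimensional and v[0,0] is a nonzero real number, then v[k,q] = conj(v[−k,q]) for all (k,q) ∈ I. -/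
/-! Write `σ` for the flip `(k,q) ↦ (-k,q)`. The symmetries of `x̃` and `ρ̂` give
`M₂[σp, σr] = conj M₂[p, r]` (`secondMoment_flip`), so `M₂` commutes with the conjugate-linear
involution `v ↦ v'`, `v'[p] = conj v[σp]`. This maps the eigenspace of a real `λ` to itself, which
is (i). If that eigenspace is a line, then `v' = c v`; since `σ` fixes `(0,0)` and `v[0,0]` is real
and nonzero, evaluating there gives `c = 1`, which is (ii). -/

open Complex Real ComplexConjugate

/-- The block matrix `𝒯_ρ[(k₁,q₁),(k₂,q₂)] = ρ̂[k₁ - k₂]`, with the `k`-index represented by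
`i : Fin (2B+1)` via `k = i - B`, and the `q`-index by `Fin Q`. -/
noncomputable def Tmat2 (B Q : ℕ) (rhohat : ℤ → ℂ) :
    Matrix (Fin (2 * B + 1) × Fin Q) (Fin (2 * B + 1) × Fin Q) ℂ :=
  Matrix.of fun p₁ p₂ => rhohat (((p₁.1 : ℕ) : ℤ) - ((p₂.1 : ℕ) : ℤ))

/-- The flip `(k,q) ↦ (-k,q)` as a permutation of the index set. -/
def flipEquiv (B Q : ℕ) : Fin (2 * B + 1) × Fin Q ≃ Fin (2 * B + 1) × Fin Q :=
  Function.Involutive.toPerm (fun p => (negIdx B p.1, p.2)) (by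
    rintro ⟨i, q⟩
    have := i.2
    simp only [negIdx, Prod.mk.injEq, Fin.ext_iff, and_true]
    omega)

lemma Tmat2_flip (B Q : ℕ) (rhohat : ℤ → ℂ)
    (hρ : ∀ k ∈ Finset.Icc (-(2 * B : ℤ)) (2 * B : ℤ), rhohat (-k) = conj (rhohat k))
    (p r : Fin (2 * B + 1) × Fin Q) :
    Tmat2 B Q rhohat (flipEquiv B Q p) (flipEquiv B Q r) = conj (Tmat2 B Q rhohat p r) := by
  have hp := p.1.2
  have hr := r.1.2
  simp only [Tmat2, Matrix.of_apply]
  rw [← hρ _ (by rw [Finset.mem_Icc]; omega)]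
  congr 1
  simp only [flipEquiv, Function.Involutive.coe_toPerm, negIdx]
  omega

lemma secondMoment_flip (B Q : ℕ) (xt : Fin (2 * B + 1) × Fin Q → ℂ)
    (hxt : ∀ p : Fin (2 * B + 1) × Fin Q, xt (negIdx B p.1, p.2) = conj (xt p))
    (rhohat : ℤ → ℂ)
    (hρ : ∀ k ∈ Finset.Icc (-(2 * B : ℤ)) (2 * B : ℤ), rhohat (-k) = conj (rhohat k))
    (c : ℝ) (p r : Fin (2 * B + 1) × Fin Q) :
    ((c : ℂ) • (Matrix.diagonal xt * Tmat2 B Q rhohat * (Matrix.diagonal xt).conjTranspose))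
        (flipEquiv B Q p) (flipEquiv B Q r) =
      conj (((c : ℂ) • (Matrix.diagonal xt * Tmat2 B Q rhohat *
        (Matrix.diagonal xt).conjTranspose)) p r) := by
  have hx : ∀ p, xt (flipEquiv B Q p) = conj (xt p) := hxt
  simp only [Matrix.diagonal_conjTranspose, Matrix.smul_apply, Matrix.mul_diagonal,
    Matrix.diagonal_mul, Tmat2_flip B Q rhohat hρ, hx, smul_eq_mul, map_mul, Pi.star_apply,
    RCLike.star_def, Complex.conj_ofReal]

/-- A matrix whose entries are conjugated by a permutation `σ` of the indices commutes with
`v ↦ conj ∘ v ∘ σ`, which therefore preserves its eigenspaces for real eigenvalues. -/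
lemma mulVec_conj_comp {ι : Type*} [Fintype ι] (σ : ι ≃ ι) (M : Matrix ι ι ℂ)
    (hM : ∀ p r, M (σ p) (σ r) = conj (M p r)) (lam : ℝ) (v : ι → ℂ)
    (hv : M.mulVec v = (lam : ℂ) • v) :
    M.mulVec (fun p => conj (v (σ p))) = (lam : ℂ) • (fun p => conj (v (σ p))) := by
  funext p
  have h := congrArg conj (congrFun hv (σ p))
  simp only [Matrix.mulVec, dotProduct, Pi.smul_apply, smul_eq_mul, map_mul, map_sum,
    Complex.conj_ofReal] at h ⊢
  rw [← h, ← Equiv.sum_comp σ (fun r => conj (M (σ p) r) * conj (v r))]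
  refine Finset.sum_congr rfl fun r _ => ?_
  rw [hM, Complex.conj_conj]

/-- with conjugate-symmetric `x̃` and `ρ̂`, (i) eigenvectors of
`M₂ = 2π D_x̃ 𝒯_ρ D_x̃*` are stable under the conjugate-flip `v'[k,q] = conj (v[-k,q])`, and
(ii) an eigenvector for a one-dimensional eigenspace with `v[0,0]` real and nonzero satisfies
`v[k,q] = conj (v[-k,q])`. -/
theorem stmt_14 (B Q : ℕ) (hB : 1 ≤ B) (hQ : 1 ≤ Q)
    (xt : Fin (2 * B + 1) × Fin Q → ℂ)
    (hxtsym : ∀ p : Fin (2 * B + 1) × Fin Q, xt (negIdx B p.1, p.2) = conj (xt p))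
    (rhohat : ℤ → ℂ)
    (hρsym : ∀ k ∈ Finset.Icc (-(2 * B : ℤ)) (2 * B : ℤ), rhohat (-k) = conj (rhohat k))
    (M₂ : Matrix (Fin (2 * B + 1) × Fin Q) (Fin (2 * B + 1) × Fin Q) ℂ)
    (hM₂ : M₂ = ((2 * π : ℝ) : ℂ) •
      (Matrix.diagonal xt * Tmat2 B Q rhohat * (Matrix.diagonal xt).conjTranspose))
    (lam : ℝ) :
    (∀ v : Fin (2 * B + 1) × Fin Q → ℂ, M₂.mulVec v = ((lam : ℝ) : ℂ) • v →
      M₂.mulVec (fun p => conj (v (negIdx B p.1, p.2))) =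
        ((lam : ℝ) : ℂ) • (fun p => conj (v (negIdx B p.1, p.2)))) ∧
    (∀ v : Fin (2 * B + 1) × Fin Q → ℂ, M₂.mulVec v = ((lam : ℝ) : ℂ) • v →
      Module.finrank ℂ (Module.End.eigenspace (Matrix.mulVecLin M₂) ((lam : ℝ) : ℂ)) = 1 →
      (v (⟨B, by omega⟩, ⟨0, by omega⟩)).im = 0 → v (⟨B, by omega⟩, ⟨0, by omega⟩) ≠ 0 →
      ∀ p, v p = conj (v (negIdx B p.1, p.2))) := by
  have hsym : ∀ p r, M₂ (flipEquiv B Q p) (flipEquiv B Q r) = conj (M₂ p r) := by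
    subst hM₂
    exact secondMoment_flip B Q xt hxtsym rhohat hρsym (2 * π)
  have key : ∀ v : Fin (2 * B + 1) × Fin Q → ℂ, M₂.mulVec v = ((lam : ℝ) : ℂ) • v →
      M₂.mulVec (fun p => conj (v (negIdx B p.1, p.2))) =
        ((lam : ℝ) : ℂ) • (fun p => conj (v (negIdx B p.1, p.2))) :=
    mulVec_conj_comp (flipEquiv B Q) M₂ hsym lam
  refine ⟨key, fun v hv hdim him hne p => ?_⟩
  have hmem : ∀ w, M₂.mulVec w = (lam : ℂ) • w →
      w ∈ Module.End.eigenspace (Matrix.mulVecLin M₂) (lam : ℂ) := fun w hw =>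
    Module.End.mem_eigenspace_iff.mpr hw
  obtain ⟨c, hc⟩ := exists_smul_eq_of_finrank_eq_one hdim
    (x := ⟨v, hmem v hv⟩) (fun h => hne (congrFun (congrArg Subtype.val h) _))
    ⟨_, hmem _ (key v hv)⟩
  have hc' : ∀ r, c * v r = conj (v (negIdx B r.1, r.2)) := fun r =>
    congrFun (congrArg Subtype.val hc) r
  have hmid : negIdx B ⟨B, by omega⟩ = ⟨B, by omega⟩ := by
    simp only [negIdx, Fin.ext_iff]
    omega
  have h0 := hc' (⟨B, by omega⟩, ⟨0, by omega⟩)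
  rw [hmid, Complex.conj_eq_iff_im.mpr him] at h0
  have hc1 : c = 1 := mul_right_cancel₀ hne (h0.trans (one_mul _).symm)
  rw [← hc' p, hc1, one_mul]
end
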